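/- arXiv:1611.09730 — 2 statements merged into one kernel-verified Lean document; each statement's English description precedes it below -/
import Mathlib

section
/- Let R = R(A, α, u − α(u), 1) be a conformal ambiskew polynomial ring with Casimir element z = xy − u, and let Z = {p(z) : p a nonzero polynomial with coefficients in K} be the multiplicatively closed set of nonzero elements of the subalgebra K[z]. Suppose that the skew Laurent polynomial ring A[y^{±1}; α] is simple and that its centre equals K. Then the central localization R_Z of R at Z is a simple ring if and only if, for every m ≥ 1, there exists a nonzero polynomial p_m(X) ∈ K[X] such that p_m(u) ∈ v^(m)A, where v^(m) = u − α^m(u). -/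
/-!
Elements of `Z` are regular in `R`, so `R_Z` is simple exactly when every nonzero ideal of `R`
meets `K[z] \ {0}`.

Inverting `y` turns `R` into `S[X]`, where `S = A[y^{±1}; α]` and `X` is a central indeterminate
corresponding to `z`: one has `x = y⁻¹(X + α(u))`. Since `S` is simple with centre `K`, every
nonzero ideal of `S[X]` meets `K[X]` nontrivially (`exists_map_mem_of_ne_bot`), so every nonzero
ideal `I` of `R` contains `p(z)yⁿ` for some `p ≠ 0` and some `n` (`exists_pow_mem`). If the
polynomials `p_m` exist, the exponent `n` can be lowered to `0` (`exists_aeval_mem`): the elements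
`xyⁿ = (z + u)yⁿ⁻¹` and `xyⁿ − yⁿx = v^(n)yⁿ⁻¹` show that `I` contains `p(z)(z + u)yⁿ⁻¹` and
`p(z)v^(n)yⁿ⁻¹`, hence `p(z)p_n(−z)yⁿ⁻¹`.

Conversely, let `R` act on the Verma-type module `⊕ yⁱA = R/Rx`, on which `z` acts as `−α(u)`.
With `w = α^(1−m)(v^(m))`, the sequences whose terms of index `< m` lie in `wA` form a submodule,
and the elements of `R` mapping the whole module into it form an ideal containing `y ^ m`
(`exists_ideal_pow_y_mem`). If `R_Z` is simple, this ideal contains some `p(z)` with `p ≠ 0`, which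
forces `p(−α^m(u)) ∈ v^(m)A`, and `u ≡ α^m(u)` modulo `v^(m)A` gives `p(−u) ∈ v^(m)A`.

Homomorphisms out of `R` are produced by its universal property (`IsAmbiskew.exists_lift`).
-/


noncomputable section

/-- The "monomial" of degree `i` in a generalized Weyl algebra: `Y^i` for `i ≥ 0`
and `X^(-i)` for `i < 0`. -/
def gwaMon {W : Type*} [Monoid W] (X Y : W) : ℤ → W :=
  fun i => if 0 ≤ i then Y ^ i.toNat else X ^ (-i).toNat

/-- `W` is a generalized Weyl algebra `W(A, α, u)` with respect to the embedding
`ι : A →+* W` and the elements `X, Y`: the defining relations hold and `W` is free as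
a left `A`-module with basis `{X^i : i ≥ 1} ∪ {1} ∪ {Y^i : i ≥ 1}`. -/
structure IsGWA {A W : Type*} [Ring A] [Ring W]
    (α : A ≃+* A) (u : A) (ι : A →+* W) (X Y : W) : Prop where
  central : ∀ a : A, u * a = a * u
  YX : Y * X = ι (α u)
  XY : X * Y = ι u
  Ya : ∀ a : A, Y * ι a = ι (α a) * Y
  Xa : ∀ a : A, X * ι a = ι (α.symm a) * X
  free : Function.Bijective
    (fun f : ℤ →₀ A => f.sum fun i a => ι a * gwaMon X Y i)

/-- `R` is the conformal ambiskew polynomial ring `R(A, α, u − α(u), 1)` with respect to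
the embedding `ι : A →ₐ[K] R` and the elements `x, y`: the defining relations hold and
`R` is free as a left `A`-module with basis `{yⁱxʲ : i, j ≥ 0}`. -/
structure IsAmbiskew {K A R : Type*} [Field K] [Ring A] [Algebra K A] [Ring R] [Algebra K R]
    (α : A ≃ₐ[K] A) (u : A) (ι : A →ₐ[K] R) (x y : R) : Prop where
  ucentral : ∀ a : A, u * a = a * u
  ya : ∀ a : A, y * ι a = ι (α a) * y
  xa : ∀ a : A, x * ι a = ι (α.symm a) * x
  xy : x * y = y * x + ι (u - α u)
  free : Function.Bijective
    (fun f : ℕ × ℕ →₀ A => f.sum fun p a => ι a * (y ^ p.1 * x ^ p.2))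

/-- `S` is the skew Laurent polynomial ring `A[y^{±1}; α]` with respect to the embedding
`ι : A →ₐ[K] S` and the invertible element `Y`: `Y·a = α(a)·Y` and `S` is free as a left
`A`-module with basis `{Yⁱ : i ∈ ℤ}`. -/
structure IsSkewLaurent {K A S : Type*} [Field K] [Ring A] [Algebra K A] [Ring S] [Algebra K S]
    (α : A ≃ₐ[K] A) (ι : A →ₐ[K] S) (Y : Sˣ) : Prop where
  comm : ∀ a : A, (Y : S) * ι a = ι (α a) * (Y : S)
  free : Function.Bijective
    (fun f : ℤ →₀ A => f.sum fun i a => ι a * ((Y ^ i : Sˣ) : S))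

/-- `φ : R →+* C` exhibits `C` as the localization of `R` at the multiplicative set `Z`
of central elements: each element of `Z` is central and becomes a unit, every element of
`C` is a fraction, and the kernel of `φ` is the set of elements annihilated by `Z`. -/
structure IsCentralLocalization {R C : Type*} [Ring R] [Ring C] (Z : Set R) (φ : R →+* C) : Prop where
  central : ∀ s ∈ Z, ∀ r : R, s * r = r * s
  isUnit : ∀ s ∈ Z, IsUnit (φ s)
  surj : ∀ c : C, ∃ r : R, ∃ s ∈ Z, c * φ s = φ r
  ker : ∀ r : R, φ r = 0 ↔ ∃ s ∈ Z, r * s = 0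

/-- A two-sided ideal `P` is prime: it is proper and whenever the product of two two-sided
ideals lies in `P`, one of them lies in `P`. -/
def IsPrimeTwoSided {C : Type*} [Ring C] (P : TwoSidedIdeal C) : Prop :=
  P ≠ ⊤ ∧ ∀ I J : TwoSidedIdeal C, (∀ a ∈ I, ∀ b ∈ J, a * b ∈ P) → I ≤ P ∨ J ≤ P

/-- A two-sided ideal `M` is maximal: proper and maximal among proper two-sided ideals. -/
def IsMaximalTwoSided {C : Type*} [Ring C] (M : TwoSidedIdeal C) : Prop :=
  M ≠ ⊤ ∧ ∀ T : TwoSidedIdeal C, M < T → T = ⊤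

/-- Evaluation of a (commutative) multivariate polynomial over `K` at a family of
(pairwise commuting, central) elements of a possibly noncommutative `K`-algebra. -/
def mvEval {K A : Type*} [CommSemiring K] [Ring A] [Algebra K A] {n : ℕ}
    (v : Fin n → A) (p : MvPolynomial (Fin n) K) : A :=
  p.support.sum fun d => algebraMap K A (MvPolynomial.coeff d p) *
    ((List.finRange n).map fun i => v i ^ d i).prod

/-- The components of the graded ideal `J(I)` of a generalized Weyl algebra:
`I_i = I_{-i} = A` for `i ≥ m`, `I_i = ∩_{ℓ=0}^{m−1−i} α^{−ℓ}(I)` for `0 ≤ i ≤ m−1`, and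
`I_{−i} = ∩_{ℓ=i}^{m−1} α^{−ℓ}(I)` for `0 ≤ i ≤ m−1`. -/
def Jcomp {A : Type*} [Ring A] (α : A ≃+* A) (I : Set A) (m : ℕ) : ℤ → Set A :=
  fun d => if m ≤ d.natAbs then Set.univ
    else if 0 ≤ d then ⋂ ℓ ∈ Finset.range (m - d.natAbs), (⇑α.symm)^[ℓ] '' I
    else ⋂ ℓ ∈ Finset.Icc d.natAbs (m - 1), (⇑α.symm)^[ℓ] '' I

/-- The subset of a generalized Weyl algebra consisting of all elements whose (unique)
graded components of each degree `d` have coefficients in the prescribed set `comp d`. -/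
def gwaGradedSet {A W : Type*} [Ring A] [Ring W] (ι : A →+* W) (X Y : W)
    (comp : ℤ → Set A) : Set W :=
  {w | ∃ f : ℤ →₀ A, (∀ d, f d ∈ comp d) ∧ w = f.sum fun d a => ι a * gwaMon X Y d}

/-- The set `Au + Aα^m(u)` in `A`. -/
def genSet2 {A : Type*} [Ring A] (x y : A) : Set A :=
  {a : A | ∃ b c : A, a = b * x + c * y}

/-- The product of two sets in a ring, closed under finite sums: for two-sided ideals
this is the usual ideal product. -/
def setMulSum {A : Type*} [Ring A] (S T : Set A) : Set A :=
  {x | ∃ (n : ℕ) (f g : Fin n → A), (∀ i, f i ∈ S ∧ g i ∈ T) ∧ x = ∑ i, f i * g i}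

/-- The (right-nested) product of a list of sets in a ring; the empty product is `A`. -/
def listProdSet {A : Type*} [Ring A] (l : List (Set A)) : Set A :=
  l.foldr setMulSum Set.univ

/-- The element `d_i = α(u)·α²(u)⋯αⁱ(u)`. -/
def dElt {A : Type*} [Ring A] (α : A ≃+* A) (u : A) (i : ℕ) : A :=
  ((List.range i).map fun s => (⇑α)^[s + 1] u).prod

/-- The element `e_i = α^{−i}(d_i) = u·α^{−1}(u)⋯α^{1−i}(u)`. -/
def eElt {A : Type*} [Ring A] (α : A ≃+* A) (u : A) (i : ℕ) : A :=
  (⇑α.symm)^[i] (dElt α u i)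

/-- Product of two two-sided ideals. -/
def tsiMul {R : Type*} [Ring R] (I J : TwoSidedIdeal R) : TwoSidedIdeal R :=
  TwoSidedIdeal.span {x | ∃ a ∈ I, ∃ b ∈ J, x = a * b}

/-- The (right-nested) product of a list of two-sided ideals; the empty product is `R`. -/
def tsiListProd {R : Type*} [Ring R] (l : List (TwoSidedIdeal R)) : TwoSidedIdeal R :=
  l.foldr tsiMul ⊤

/-- A subset of a ring is a right ideal. -/
def IsRightIdealSet {Q : Type*} [Ring Q] (S : Set Q) : Prop :=
  (0 : Q) ∈ S ∧ (∀ a ∈ S, ∀ b ∈ S, a + b ∈ S) ∧ (∀ a ∈ S, -a ∈ S) ∧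
    (∀ a ∈ S, ∀ q : Q, a * q ∈ S)

/-- A right ideal is uniform: it is nonzero and any two nonzero elements generate right
ideals with nonzero intersection (equivalently, any two nonzero submodules intersect
nontrivially). -/
def IsUniformRightIdealSet {Q : Type*} [Ring Q] (S : Set Q) : Prop :=
  (∃ a ∈ S, a ≠ 0) ∧ ∀ a ∈ S, a ≠ 0 → ∀ b ∈ S, b ≠ 0 →
    ∃ q₁ q₂ : Q, a * q₁ = b * q₂ ∧ a * q₁ ≠ 0

open Polynomial

/-! ### The universal property of the ambiskew polynomial ring -/

/-- The defining relations of `R(A, α, u − α(u), 1)` for elements `x, y` of a ring `E`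
relative to a homomorphism `j : A →+* E`, with no freeness requirement. -/
structure AmbiskewRel {K A E : Type*} [Field K] [Ring A] [Algebra K A] [Ring E]
    (α : A ≃ₐ[K] A) (u : A) (j : A →+* E) (x y : E) : Prop where
  ya : ∀ a : A, y * j a = j (α a) * y
  xa : ∀ a : A, x * j a = j (α.symm a) * x
  xy : x * y = y * x + j (u - α u)

section Relations

variable {K A E : Type*} [Field K] [Ring A] [Algebra K A] [Ring E]
  {α : A ≃ₐ[K] A} {u : A} {j : A →+* E} {x y : E}

theorem AmbiskewRel.pow_y_mul (h : AmbiskewRel α u j x y) (n : ℕ) (a : A) :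
    y ^ n * j a = j ((⇑α)^[n] a) * y ^ n := by
  induction n generalizing a with
  | zero => simp
  | succ n ih => rw [pow_succ, mul_assoc, h.ya, ← mul_assoc, ih, mul_assoc,
      Function.iterate_succ_apply]

/-- The commutator of `x` with a power of `y`; this is where `v^(m) = u − α^m(u)` enters. -/
theorem AmbiskewRel.x_mul_pow_y (h : AmbiskewRel α u j x y) (n : ℕ) :
    x * y ^ (n + 1) = y ^ (n + 1) * x + j (u - (⇑α)^[n + 1] u) * y ^ n := by
  induction n with
  | zero => simpa using h.xy
  | succ n ih =>
    have h1 : y ^ (n + 1) * j (u - α u)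
        = j ((⇑α)^[n + 1] u - (⇑α)^[n + 1 + 1] u) * y ^ (n + 1) := by
      rw [map_sub, mul_sub, h.pow_y_mul, h.pow_y_mul, ← sub_mul, ← map_sub]
      rw [Function.iterate_succ_apply (⇑α) (n + 1) u]
    rw [pow_succ y (n + 1), ← mul_assoc, ih, add_mul, mul_assoc _ x y, h.xy, mul_add, h1,
      mul_assoc _ _ y, ← pow_succ, ← mul_assoc (y ^ (n + 1)) y x, ← pow_succ, add_assoc, ← add_mul,
      ← map_add]
    congr 3
    abel

end Relations

section Universal

variable {K A R : Type*} [Field K] [Ring A] [Algebra K A] [Ring R] [Algebra K R]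
  {α : A ≃ₐ[K] A} {u : A} {ι : A →ₐ[K] R} {x y : R}

theorem IsAmbiskew.rel (hR : IsAmbiskew α u ι x y) :
    AmbiskewRel α u (ι : A →+* R) x y where
  ya := hR.ya
  xa := hR.xa
  xy := hR.xy

theorem IsAmbiskew.induction (hR : IsAmbiskew α u ι x y) {P : R → Prop} (h0 : P 0)
    (hadd : ∀ a b, P a → P b → P (a + b))
    (hmon : ∀ (a : A) (i k : ℕ), P (ι a * (y ^ i * x ^ k))) (r : R) : P r := by
  obtain ⟨f, rfl⟩ := hR.free.2 r
  exact Finset.sum_induction _ P hadd h0 fun p _ => hmon _ _ _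

/-- The additive bijection from coefficient families to `R` given by the free basis. -/
def IsAmbiskew.coeffEquiv (hR : IsAmbiskew α u ι x y) : (ℕ × ℕ →₀ A) ≃+ R :=
  AddEquiv.ofBijective
    (Finsupp.liftAddHom fun p : ℕ × ℕ =>
      (AddMonoidHom.mulRight (y ^ p.1 * x ^ p.2)).comp (ι : A →+ R)) hR.free

theorem IsAmbiskew.coeffEquiv_single (hR : IsAmbiskew α u ι x y) (a : A) (i k : ℕ) :
    hR.coeffEquiv (Finsupp.single (i, k) a) = ι a * (y ^ i * x ^ k) := by
  refine (Finsupp.liftAddHom_apply_single (fun p : ℕ × ℕ =>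
    (AddMonoidHom.mulRight (y ^ p.1 * x ^ p.2)).comp (ι : A →+ R)) (i, k) a).trans ?_
  simp

/-- Elements satisfying the defining relations in any ring are the images of `x` and `y`
under a ring homomorphism extending the given one on `A`. -/
theorem IsAmbiskew.exists_lift (hR : IsAmbiskew α u ι x y) {E : Type*} [Ring E]
    {j : A →+* E} {X Y : E} (h : AmbiskewRel α u j X Y) :
    ∃ θ : R →+* E, (∀ a, θ (ι a) = j a) ∧ θ x = X ∧ θ y = Y := by
  let θ : R →+ E := (Finsupp.liftAddHom fun p : ℕ × ℕ =>
      (AddMonoidHom.mulRight (Y ^ p.1 * X ^ p.2)).comp (j : A →+ E)).comp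
      hR.coeffEquiv.symm.toAddMonoidHom
  have hθ : ∀ (a : A) (i k : ℕ), θ (ι a * (y ^ i * x ^ k)) = j a * (Y ^ i * X ^ k) := by
    intro a i k
    rw [← hR.coeffEquiv_single]
    simp [θ]
  have hι : ∀ a, θ (ι a) = j a := fun a => by simpa using hθ a 0 0
  have hx : θ x = X := by simpa using hθ 1 0 1
  have hy : θ y = Y := by simpa using hθ 1 1 0
  have hone : θ 1 = 1 := by simpa using hι 1
  -- Multiplicativity in the left factor propagates from the generators `A`, `x`, `y`.
  have ma : ∀ a r, θ (ι a * r) = θ (ι a) * θ r := by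
    intro a r
    refine hR.induction (P := fun r => θ (ι a * r) = θ (ι a) * θ r) (by simp) ?_ ?_ r
    · intro b c hb hc
      simp only [mul_add, map_add, hb, hc]
    · intro b i k
      rw [← mul_assoc, ← map_mul, hθ, hθ, hι, map_mul, mul_assoc]
  have my : ∀ r, θ (y * r) = θ y * θ r := by
    intro r
    refine hR.induction (P := fun r => θ (y * r) = θ y * θ r) (by simp) ?_ ?_ r
    · intro b c hb hc
      simp only [mul_add, map_add, hb, hc]
    · intro b i k
      rw [← mul_assoc, hR.ya, mul_assoc, ← mul_assoc y, ← pow_succ', hθ, hθ, hy,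
        ← mul_assoc Y, h.ya, mul_assoc, ← mul_assoc Y, ← pow_succ']
  have mx : ∀ r, θ (x * r) = θ x * θ r := by
    intro r
    refine hR.induction (P := fun r => θ (x * r) = θ x * θ r) (by simp) ?_ ?_ r
    · intro b c hb hc
      simp only [mul_add, map_add, hb, hc]
    · intro b i k
      rw [hθ, hx, ← mul_assoc, hR.xa, ← mul_assoc X, h.xa, mul_assoc, mul_assoc]
      cases i with
      | zero => simpa [pow_succ'] using hθ (α.symm b) 0 (k + 1)
      | succ i =>
        have e1 := hR.rel.x_mul_pow_y i
        have e2 := h.x_mul_pow_y i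
        rw [← mul_assoc x, ← mul_assoc X, e1, e2, add_mul, add_mul, mul_add, mul_add, map_add,
          mul_assoc (y ^ (i + 1)), ← pow_succ', hθ, mul_assoc (Y ^ (i + 1)), ← pow_succ']
        congr 1
        rw [RingHom.coe_coe, mul_assoc, ← mul_assoc, ← map_mul, hθ, map_mul]
        simp only [mul_assoc]
  have mypow : ∀ i r, θ (y ^ i * r) = θ (y ^ i) * θ r := by
    intro i
    induction i with
    | zero => simp [hone]
    | succ i ih => intro r; rw [pow_succ', mul_assoc, my, ih, my, mul_assoc]
  have mxpow : ∀ i r, θ (x ^ i * r) = θ (x ^ i) * θ r := by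
    intro i
    induction i with
    | zero => simp [hone]
    | succ i ih => intro r; rw [pow_succ', mul_assoc, mx, ih, mx, mul_assoc]
  have hmul : ∀ r s, θ (r * s) = θ r * θ s := by
    intro r s
    refine hR.induction (P := fun r => θ (r * s) = θ r * θ s) (by simp) ?_ ?_ r
    · intro b c hb hc
      simp only [add_mul, map_add, hb, hc]
    · intro b i k
      rw [mul_assoc, ma, mul_assoc, mypow, mxpow, ma, mypow]
      simp only [mul_assoc]
  exact ⟨{ θ with map_one' := hone, map_mul' := hmul, map_zero' := map_zero θ }, hι, hx, hy⟩

end Universal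

/-! ### Polynomial rings over a simple ring with centre `K` -/

/-- A nonzero two-sided ideal of `S[X]`, for `S` simple with centre `K`, meets `K[X]`
nontrivially: an element of least degree may be taken monic by simplicity, and then its
commutators with constants have smaller degree, so its coefficients are central. -/
theorem exists_map_mem_of_ne_bot {K S : Type*} [Field K] [Ring S] [Algebra K S] [IsSimpleRing S]
    (hc : ∀ s : S, (∀ w : S, s * w = w * s) → ∃ k : K, s = algebraMap K S k)
    (J : TwoSidedIdeal S[X]) (f₀ : S[X]) (hf₀ : f₀ ∈ J) (hne : f₀ ≠ 0) :
    ∃ p : K[X], p ≠ 0 ∧ p.map (algebraMap K S) ∈ J := by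
  classical
  have hex : ∃ d, ∃ f ∈ J, f ≠ 0 ∧ f.natDegree = d := ⟨_, f₀, hf₀, hne, rfl⟩
  obtain ⟨d, ⟨f₁, hf₁, hne₁, hd₁⟩, hmin⟩ : ∃ d, (∃ f ∈ J, f ≠ 0 ∧ f.natDegree = d) ∧
      ∀ g ∈ J, g ≠ 0 → d ≤ g.natDegree :=
    ⟨Nat.find hex, Nat.find_spec hex, fun g hg h0 => Nat.find_min' hex ⟨g, hg, h0, rfl⟩⟩
  let L : TwoSidedIdeal S := TwoSidedIdeal.mk' {s | ∃ f ∈ J, f.natDegree ≤ d ∧ f.coeff d = s}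
    ⟨0, J.zero_mem, by simp, by simp⟩
    (by
      rintro _ _ ⟨f, hf, hd, rfl⟩ ⟨g, hg, hd', rfl⟩
      exact ⟨f + g, J.add_mem hf hg, natDegree_add_le_of_degree_le hd hd', by simp⟩)
    (by
      rintro _ ⟨f, hf, hd, rfl⟩
      exact ⟨-f, J.neg_mem hf, by simpa using hd, by simp⟩)
    (by
      rintro s _ ⟨f, hf, hd, rfl⟩
      exact ⟨C s * f, J.mul_mem_left _ _ hf, (natDegree_C_mul_le _ _).trans hd, by simp⟩)
    (by
      rintro _ s ⟨f, hf, hd, rfl⟩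
      exact ⟨f * C s, J.mul_mem_right _ _ hf, (natDegree_mul_C_le _ _).trans hd, by simp⟩)
  have hL : f₁.coeff d ∈ L := by
    rw [TwoSidedIdeal.mem_mk']
    exact ⟨f₁, hf₁, hd₁.le, rfl⟩
  have h1 : (1 : S) ∈ L := IsSimpleRing.one_mem_of_ne_zero_mem L
    (by rw [← hd₁]; simpa using hne₁) hL
  rw [TwoSidedIdeal.mem_mk'] at h1
  obtain ⟨f, hf, hfd, hfc⟩ := h1
  have hcomm : ∀ s : S, f * C s - C s * f = 0 := by
    intro s
    by_contra hn
    have hle : (f * C s - C s * f).natDegree ≤ d :=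
      (natDegree_sub_le_of_le ((natDegree_mul_C_le _ _).trans hfd)
        ((natDegree_C_mul_le _ _).trans hfd)).trans (max_self d).le
    have heq := le_antisymm hle
      (hmin _ (J.sub_mem (J.mul_mem_right _ _ hf) (J.mul_mem_left _ _ hf)) hn)
    apply hn
    rw [← leadingCoeff_eq_zero, leadingCoeff, heq]
    simp [hfc]
  have hl : f ∈ lifts (algebraMap K S) := by
    rw [lifts_iff_coeff_lifts]
    intro n
    obtain ⟨k, hk⟩ := hc (f.coeff n) fun w => by
      have := congrArg (fun g => coeff g n) (hcomm w)
      simpa [sub_eq_zero] using this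
    exact ⟨k, hk.symm⟩
  obtain ⟨p, rfl⟩ := (mem_lifts _).1 hl
  refine ⟨p, ?_, hf⟩
  rintro rfl
  simp at hfc

/-! ### Differences of polynomial values -/

theorem aeval_eq_add_mul_sub {K A : Type*} [Field K] [Ring A] [Algebra K A] {b c : A}
    (h : Commute b c) (q : K[X]) : ∃ d : A, aeval b q = aeval c q + d * (b - c) := by
  induction q using Polynomial.induction_on' with
  | add p q hp hq =>
    obtain ⟨d, hd⟩ := hp
    obtain ⟨e, he⟩ := hq
    exact ⟨d + e, by rw [map_add, map_add, hd, he, add_mul]; abel⟩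
  | monomial n k =>
    refine ⟨algebraMap K A k * ∑ i ∈ Finset.range n, b ^ i * c ^ (n - 1 - i), ?_⟩
    rw [aeval_monomial, aeval_monomial, mul_assoc, h.geom_sum₂_mul, mul_sub]
    abel

/-! ### Embedding into polynomials over the skew Laurent ring -/

section Laurent

variable {K A S : Type*} [Field K] [Ring A] [Algebra K A] [Ring S] [Algebra K S]
  {α : A ≃ₐ[K] A} {u : A} {ιS : A →ₐ[K] S} {yS : Sˣ}

theorem IsSkewLaurent.comm_inv (hS : IsSkewLaurent α ιS yS) (a : A) :
    ((yS⁻¹ : Sˣ) : S) * ιS a = ιS (α.symm a) * ((yS⁻¹ : Sˣ) : S) := by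
  have h := hS.comm (α.symm a)
  rw [AlgEquiv.apply_symm_apply] at h
  rw [Units.inv_mul_eq_iff_eq_mul, ← mul_assoc, h, mul_assoc, Units.mul_inv, mul_one]

/-- Adjoining a central indeterminate `X` in the role of the Casimir element, the elements
`y⁻¹(X + α(u))` and `y` of `S[X]` satisfy the ambiskew relations. -/
theorem IsSkewLaurent.rel (hu : ∀ a : A, u * a = a * u) (hS : IsSkewLaurent α ιS yS) :
    AmbiskewRel α u ((C : S →+* S[X]).comp (ιS : A →+* S))
      (C ((yS⁻¹ : Sˣ) : S) * (X + C (ιS (α u)))) (C (yS : S)) where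
  ya a := by
    simp only [RingHom.comp_apply, RingHom.coe_coe]
    rw [← C_mul, hS.comm, C_mul]
  xa a := by
    have hα : α u * a = a * α u := by
      have := congrArg α (hu (α.symm a))
      simpa using this
    simp only [RingHom.comp_apply, RingHom.coe_coe]
    rw [mul_assoc, add_mul, X_mul_C, ← C_mul, ← map_mul, hα, map_mul, C_mul, ← mul_add,
      ← mul_assoc, ← C_mul, hS.comm_inv, C_mul, mul_assoc]
  xy := by
    simp only [RingHom.comp_apply, RingHom.coe_coe]
    rw [← mul_assoc, ← C_mul, Units.mul_inv, C_1, one_mul, mul_assoc, add_mul, ← C_mul,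
      ← hS.comm, X_mul_C, C_mul, ← mul_add, ← mul_assoc, ← C_mul, Units.inv_mul, C_1, one_mul,
      map_sub, C_sub]
    abel

theorem IsSkewLaurent.induction (hS : IsSkewLaurent α ιS yS) {P : S → Prop} (h0 : P 0)
    (hadd : ∀ a b, P a → P b → P (a + b))
    (hmon : ∀ (a : A) (i : ℤ), P (ιS a * ((yS ^ i : Sˣ) : S))) (r : S) : P r := by
  obtain ⟨f, rfl⟩ := hS.free.2 r
  exact Finset.sum_induction _ P hadd h0 fun p _ => hmon _ _

theorem IsSkewLaurent.eq_zero_of_sum (hS : IsSkewLaurent α ιS yS) (s : Finset ℕ) (a : ℕ → A)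
    (h : ∑ i ∈ s, ιS (a i) * (yS : S) ^ i = 0) : ∀ i ∈ s, a i = 0 := by
  classical
  let f : ℤ →₀ A := ∑ i ∈ s, Finsupp.single (i : ℤ) (a i)
  have hf : f = 0 := by
    apply hS.free.1
    have h1 := map_sum (Finsupp.liftAddHom fun i : ℤ =>
      (AddMonoidHom.mulRight ((yS ^ i : Sˣ) : S)).comp (ιS : A →+ S))
      (fun i : ℕ => Finsupp.single (i : ℤ) (a i)) s
    simp only [Finsupp.liftAddHom_apply_single] at h1
    refine Eq.trans (h1.trans ?_) (Finsupp.sum_zero_index).symm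
    simpa using h
  intro i hi
  have := DFunLike.congr_fun hf (i : ℤ)
  simpa [f, Finsupp.finsetSum_apply, Finsupp.single_apply, hi] using this

variable {R : Type*} [Ring R] [Algebra K R] {ι : A →ₐ[K] R} {x y : R}

/-- The map `R → S[X]` with `y ↦ y`, `x ↦ y⁻¹(X + α(u))` is injective: the image of `yⁱxʲ` has
degree at most `j` in `X`, with coefficient `y^{i−j}` at `X^j`. -/
theorem eq_zero_of_laurent_eq_zero (hR : IsAmbiskew α u ι x y)
    (hS : IsSkewLaurent α ιS yS) (θ : R →+* S[X]) (hι : ∀ a, θ (ι a) = C (ιS a))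
    (hx : θ x = C ((yS⁻¹ : Sˣ) : S) * (X + C (ιS (α u)))) (hy : θ y = C (yS : S))
    (r : R) (hr : θ r = 0) : r = 0 := by
  classical
  have hdeg : ∀ k : ℕ, (θ x ^ k).natDegree ≤ k := by
    intro k
    have h1 : (θ x).natDegree ≤ 1 := by
      rw [hx]
      refine (natDegree_C_mul_le _ _).trans ?_
      exact natDegree_add_le_of_degree_le natDegree_X_le (by simp)
    simpa using natDegree_pow_le_of_le k h1
  have hlead : ∀ k : ℕ, (θ x ^ k).coeff k = ((yS⁻¹ : Sˣ) : S) ^ k := by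
    intro k
    have h1 : (θ x).natDegree ≤ 1 := by simpa using hdeg 1
    have := coeff_pow_of_natDegree_le (m := k) h1
    rw [mul_one] at this
    rw [this, hx]
    simp
  obtain ⟨f, rfl⟩ := hR.free.2 r
  by_contra hne
  have hf : f.support.Nonempty := by
    rw [Finsupp.support_nonempty_iff]
    rintro rfl
    simp at hne
  obtain ⟨q, hq, hmax⟩ := Finset.exists_max_image f.support (fun p => p.2) hf
  -- Extract the coefficient of the largest power of `X` that occurs.
  have h1 : ∑ p ∈ f.support, (if p.2 = q.2 then
      ιS (f p) * ((yS : S) ^ p.1 * ((yS⁻¹ : Sˣ) : S) ^ q.2) else 0) = 0 := by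
    have h2 := congrArg (fun g => coeff g q.2) hr
    simp only [Finsupp.sum, map_sum, finsetSum_coeff, coeff_zero] at h2
    refine (Finset.sum_congr rfl fun p hp => ?_).trans h2
    rw [map_mul, map_mul, map_pow, map_pow, hι, hy, ← C_pow, coeff_C_mul, coeff_C_mul]
    split_ifs with h
    · rw [h, hlead]
    · have hlt : p.2 < q.2 := lt_of_le_of_ne (hmax p hp) h
      rw [coeff_eq_zero_of_natDegree_lt ((hdeg _).trans_lt hlt)]
      simp
  rw [← Finset.sum_filter] at h1
  have h3 : ∑ p ∈ f.support with p.2 = q.2, ιS (f (p.1, q.2)) * (yS : S) ^ p.1 = 0 := by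
    have h4 := congrArg (· * (yS : S) ^ q.2) h1
    simp only [Finset.sum_mul, zero_mul] at h4
    rw [← h4]
    refine Finset.sum_congr rfl fun p hp => ?_
    rw [Finset.mem_filter] at hp
    rw [← hp.2, mul_assoc, mul_assoc, ← Units.val_pow_eq_pow_val, ← Units.val_pow_eq_pow_val,
      ← Units.val_pow_eq_pow_val, ← Units.val_mul (_ ^ p.2), inv_pow, inv_mul_cancel,
      Units.val_one, mul_one]
  have h5 : ∑ i ∈ (f.support.filter fun p => p.2 = q.2).image Prod.fst,
      ιS (f (i, q.2)) * (yS : S) ^ i = 0 := by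
    rw [Finset.sum_image]
    · exact h3
    · intro a ha b hb hab
      simp only [Finset.coe_filter, Set.mem_ofPred_eq] at ha hb
      exact Prod.ext hab (ha.2.trans hb.2.symm)
  have h6 := hS.eq_zero_of_sum _ (fun i => f (i, q.2)) h5 q.1
    (Finset.mem_image_of_mem _ (by simpa using hq))
  exact (Finsupp.mem_support_iff.1 hq) h6

/-- Every nonzero ideal `I` of `R` contains some `p(z)yⁿ` with `p ≠ 0`. The extension of `I`
to `S[X] = R[y⁻¹]` is encoded as the set of `s` with `yⁿ s yⁿ ∈ θ(I)` for some `n`; allowing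
powers of `y` on both sides makes it visibly two-sided. It then meets `K[X]`. -/
theorem exists_pow_mem [IsSimpleRing S]
    (hc : ∀ s : S, (∀ w : S, s * w = w * s) → ∃ k : K, s = algebraMap K S k)
    (hS : IsSkewLaurent α ιS yS) (θ : R →+* S[X]) (hι : ∀ a, θ (ι a) = C (ιS a))
    (hy : θ y = C (yS : S)) (hinj : ∀ r, θ r = 0 → r = 0) (z : R) (hz : θ z = X)
    (haev : ∀ p : K[X], θ (aeval z p) = p.map (algebraMap K S))
    (I : TwoSidedIdeal R) (r₀ : R) (hr₀ : r₀ ∈ I) (hne : r₀ ≠ 0) :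
    ∃ p : K[X], p ≠ 0 ∧ ∃ n : ℕ, aeval z p * y ^ n ∈ I := by
  let J₀ : Set S[X] := {s | ∃ n : ℕ, ∃ r ∈ I, θ r = C (yS : S) ^ n * s * C (yS : S) ^ n}
  have hadd : ∀ {s t}, s ∈ J₀ → t ∈ J₀ → s + t ∈ J₀ := by
    rintro s t ⟨n, r, hr, h⟩ ⟨m, q, hq, h'⟩
    refine ⟨n + m, y ^ m * r * y ^ m + y ^ n * q * y ^ n,
      I.add_mem (I.mul_mem_right _ _ (I.mul_mem_left _ _ hr))
        (I.mul_mem_right _ _ (I.mul_mem_left _ _ hq)), ?_⟩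
    simp only [map_add, map_mul, map_pow, h, h', hy, mul_add, add_mul]
    congr 1
    · rw [add_comm n m, pow_add]
      simp only [mul_assoc]
      rw [← pow_add, ← pow_add, add_comm]
    · rw [pow_add]
      simp only [mul_assoc]
      rw [← pow_add, ← pow_add, add_comm]
  have hneg : ∀ {s}, s ∈ J₀ → -s ∈ J₀ := by
    rintro s ⟨n, r, hr, h⟩
    exact ⟨n, -r, I.neg_mem hr, by simp [h]⟩
  have h0 : (0 : S[X]) ∈ J₀ := ⟨0, 0, I.zero_mem, by simp⟩
  -- `t` is good when multiplication by `t` on either side preserves `J₀`.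
  let G : S[X] → Prop := fun t => ∀ s ∈ J₀, t * s ∈ J₀ ∧ s * t ∈ J₀
  have G0 : G 0 := fun s _ => by simpa using h0
  have Gadd : ∀ a b, G a → G b → G (a + b) := fun a b ha hb s hs =>
    ⟨by rw [add_mul]; exact hadd (ha s hs).1 (hb s hs).1,
      by rw [mul_add]; exact hadd (ha s hs).2 (hb s hs).2⟩
  have Gmul : ∀ a b, G a → G b → G (a * b) := fun a b ha hb s hs =>
    ⟨by rw [mul_assoc]; exact (ha _ (hb s hs).1).1,
      by rw [← mul_assoc]; exact (hb _ (ha s hs).2).2⟩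
  have Gy : G (C (yS : S)) := by
    rintro s ⟨n, r, hr, h⟩
    refine ⟨⟨n, y * r, I.mul_mem_left _ _ hr, ?_⟩, ⟨n, r * y, I.mul_mem_right _ _ hr, ?_⟩⟩
    · rw [map_mul, h, hy, ← mul_assoc, ← mul_assoc, ← mul_assoc, ← pow_succ', ← pow_succ]
    · rw [map_mul, h, hy, mul_assoc, ← pow_succ, pow_succ']
      simp only [mul_assoc]
  have hyi : C (yS : S) * C ((yS⁻¹ : Sˣ) : S) = 1 := by rw [← C_mul]; simp
  have hiy : C ((yS⁻¹ : Sˣ) : S) * C (yS : S) = 1 := by rw [← C_mul]; simp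
  have Gyi : G (C ((yS⁻¹ : Sˣ) : S)) := by
    rintro s ⟨n, r, hr, h⟩
    refine ⟨⟨n + 1, r * y, I.mul_mem_right _ _ hr, ?_⟩, ⟨n + 1, y * r, I.mul_mem_left _ _ hr, ?_⟩⟩
    · rw [map_mul, h, hy, ← mul_assoc, pow_succ _ n, mul_assoc (_ ^ n) _ (C _), hyi, mul_one]
      simp only [mul_assoc]
    · rw [map_mul, h, hy, pow_succ' _ n, mul_assoc _ (s * _) _, mul_assoc s, ← mul_assoc (C _) (C _),
        hiy, one_mul]
      simp only [mul_assoc]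
  have GX : G X := by
    rintro s ⟨n, r, hr, h⟩
    refine ⟨⟨n, z * r, I.mul_mem_left _ _ hr, ?_⟩, ⟨n, r * z, I.mul_mem_right _ _ hr, ?_⟩⟩
    · rw [map_mul, h, hz]
      simp only [← mul_assoc]
      rw [X_mul (p := C (yS : S) ^ n)]
    · rw [map_mul, h, hz]
      simp only [mul_assoc]
      rw [X_mul (p := C (yS : S) ^ n)]
  have hpow : ∀ (n : ℕ) (a : A), C (yS : S) ^ n * C (ιS a)
      = C (ιS ((⇑α)^[n] a)) * C (yS : S) ^ n := by
    intro n
    induction n with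
    | zero => simp
    | succ n ih => intro a; rw [pow_succ, mul_assoc, ← C_mul, hS.comm, C_mul, ← mul_assoc, ih,
        mul_assoc, Function.iterate_succ_apply]
  have Ga : ∀ a, G (C (ιS a)) := by
    rintro a s ⟨n, r, hr, h⟩
    refine ⟨⟨n, ι ((⇑α)^[n] a) * r, I.mul_mem_left _ _ hr, ?_⟩,
      ⟨n, r * ι ((⇑α.symm)^[n] a), I.mul_mem_right _ _ hr, ?_⟩⟩
    · rw [map_mul, h, hι, ← mul_assoc (_ ^ n), hpow]
      simp only [mul_assoc]
    · have hl : (⇑α)^[n] ((⇑α.symm)^[n] a) = a :=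
        Function.LeftInverse.iterate α.apply_symm_apply n a
      rw [map_mul, h, hι, mul_assoc, hpow, hl]
      simp only [mul_assoc]
  have GC : ∀ s : S, G (C s) := by
    intro s
    refine hS.induction (P := fun s => G (C s)) (by simpa using G0) ?_ ?_ s
    · intro a b ha hb
      rw [C_add]
      exact Gadd _ _ ha hb
    · intro a i
      rw [C_mul]
      refine Gmul _ _ (Ga a) ?_
      have hp : ∀ (w : Sˣ), G (C (w : S)) → ∀ n : ℕ, G (C ((w ^ n : Sˣ) : S)) := by
        intro w hw n
        induction n with
        | zero => exact fun s hs => by simpa using hs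
        | succ n ih =>
          rw [pow_succ, Units.val_mul, C_mul]
          exact Gmul _ _ ih hw
      cases i with
      | ofNat n => simpa using hp yS Gy n
      | negSucc n => rw [zpow_negSucc, ← inv_pow]; exact hp _ Gyi (n + 1)
  have Gall : ∀ t : S[X], G t := by
    intro t
    induction t using Polynomial.induction_on with
    | C a => exact GC a
    | add p q hp hq => exact Gadd _ _ hp hq
    | monomial n a ih => rw [pow_succ, ← mul_assoc]; exact Gmul _ _ ih GX
  let J : TwoSidedIdeal S[X] := TwoSidedIdeal.mk' J₀ h0 hadd hneg
    (fun {t s} hs => (Gall t s hs).1) (fun {s t} hs => (Gall t s hs).2)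
  obtain ⟨p, hp, hpJ⟩ := exists_map_mem_of_ne_bot hc J (θ r₀)
    ((TwoSidedIdeal.mem_mk' ..).2 ⟨0, r₀, hr₀, by simp⟩) (fun h => hne (hinj _ h))
  obtain ⟨n, r, hr, h⟩ := (TwoSidedIdeal.mem_mk' ..).1 hpJ
  have hcomm : ∀ s : S, Commute (C s) (p.map (algebraMap K S)) := by
    intro s
    change C s * _ = _ * C s
    ext i
    simp [Algebra.commutes]
  refine ⟨p, hp, n + n, ?_⟩
  have : r = aeval z p * y ^ (n + n) := by
    rw [← sub_eq_zero]
    apply hinj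
    rw [map_sub, h, map_mul, map_pow, haev, hy, pow_add, ((hcomm _).pow_left n).eq, mul_assoc,
      sub_self]
  exact this ▸ hr

end Laurent

/-! ### A module on which `y ^ m` acts trivially modulo `v^(m)` -/

theorem iterate_central {K A : Type*} [Field K] [Ring A] [Algebra K A] (e : A ≃ₐ[K] A) {c : A}
    (hc : ∀ a : A, c * a = a * c) (n : ℕ) (a : A) : (⇑e)^[n] c * a = a * (⇑e)^[n] c := by
  induction n generalizing a with
  | zero => exact hc a
  | succ n ih =>
    rw [Function.iterate_succ_apply']
    have := congrArg e (ih (e.symm a))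
    simpa using this

theorem end_mul_apply {M : Type*} [AddCommGroup M] (f g : AddMonoid.End M) (v : M) :
    (f * g) v = f (g v) := rfl

theorem end_add_apply {M : Type*} [AddCommGroup M] (f g : AddMonoid.End M) (v : M) :
    (f + g) v = f v + g v := rfl

section Verma

variable {K A : Type*} [Field K] [Ring A] [Algebra K A] (α : A ≃ₐ[K] A) (u : A)

/-- The action of `A` on the Verma-type module `⊕ yⁱA`, realised on all sequences `ℕ → A`
of right coefficients: `a · yⁱ = yⁱ α⁻ⁱ(a)`. -/
def vermaA : A →+* AddMonoid.End (ℕ → A) where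
  toFun a :=
    { toFun := fun f i => (⇑α.symm)^[i] a * f i
      map_zero' := by ext; simp
      map_add' := fun f g => by ext; simp [mul_add] }
  map_one' := AddMonoidHom.ext fun f => funext fun i =>
    show (⇑α.symm)^[i] 1 * f i = f i by simp
  map_mul' a b := AddMonoidHom.ext fun f => funext fun i =>
    show (⇑α.symm)^[i] (a * b) * f i = (⇑α.symm)^[i] a * ((⇑α.symm)^[i] b * f i) by
      rw [iterate_map_mul, mul_assoc]
  map_zero' := AddMonoidHom.ext fun f => funext fun i =>
    show (⇑α.symm)^[i] 0 * f i = 0 by simp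
  map_add' a b := AddMonoidHom.ext fun f => funext fun i =>
    show (⇑α.symm)^[i] (a + b) * f i = (⇑α.symm)^[i] a * f i + (⇑α.symm)^[i] b * f i by
      rw [iterate_map_add, add_mul]

/-- The action of `x` on the Verma-type module: `x yⁱ⁺¹ = yⁱ (α⁻ⁱ(u) − α(u))`. -/
def vermaX : AddMonoid.End (ℕ → A) where
  toFun f i := ((⇑α.symm)^[i] u - α u) * f (i + 1)
  map_zero' := by ext; simp
  map_add' f g := by ext; simp [mul_add]

/-- The action of `y` on the Verma-type module: the shift. -/
def vermaY (A : Type*) [Ring A] : AddMonoid.End (ℕ → A) where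
  toFun f := fun
    | 0 => 0
    | i + 1 => f i
  map_zero' := by ext i; cases i <;> rfl
  map_add' f g := by ext i; cases i <;> simp

theorem vermaA_apply (a : A) (f : ℕ → A) (i : ℕ) :
    vermaA α a f i = (⇑α.symm)^[i] a * f i := rfl

theorem vermaX_apply (f : ℕ → A) (i : ℕ) :
    vermaX α u f i = ((⇑α.symm)^[i] u - α u) * f (i + 1) := rfl

theorem vermaY_zero (f : ℕ → A) : vermaY A f 0 = 0 := rfl

theorem vermaY_succ (f : ℕ → A) (i : ℕ) : vermaY A f (i + 1) = f i := rfl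

theorem verma_rel (hu : ∀ a : A, u * a = a * u) :
    AmbiskewRel α u (vermaA α) (vermaX α u) (vermaY A) where
  ya a := by
    ext f i
    rw [end_mul_apply, end_mul_apply, vermaA_apply]
    cases i with
    | zero => simp [vermaY_zero]
    | succ i => simp [vermaY_succ, vermaA_apply]
  xa a := by
    ext f i
    have h1 := iterate_central α.symm hu i
    have h2 := iterate_central α hu 1
    rw [Function.iterate_one] at h2
    rw [end_mul_apply, end_mul_apply, vermaA_apply, vermaX_apply, vermaX_apply,
      vermaA_apply, ← mul_assoc, ← mul_assoc, sub_mul, h1, h2, ← mul_sub,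
      Function.iterate_succ_apply]
  xy := by
    ext f i
    rw [end_mul_apply, end_add_apply, end_mul_apply, Pi.add_apply,
      vermaX_apply, vermaA_apply, vermaY_succ]
    cases i with
    | zero => simp [vermaY_zero]
    | succ i =>
      rw [vermaY_succ, vermaX_apply, ← add_mul, iterate_map_sub,
        Function.iterate_succ_apply (⇑α.symm) i (α u), AlgEquiv.symm_apply_apply]
      congr 1
      abel

end Verma

/-- There is an ideal of `R` containing `y ^ m` whose elements `p(z)` satisfy
`p(−α^m(u)) ∈ v^(m)A`: the elements mapping the Verma-type module into the submodule of
sequences whose first `m` terms lie in `wA`, where `w = α^(1−m)(v^(m))`. On this module `z` acts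
as `−α(u)`. -/
theorem exists_ideal_pow_y_mem {K A R : Type*} [Field K] [Ring A] [Algebra K A] [Ring R]
    [Algebra K R] {α : A ≃ₐ[K] A} {u : A} {ι : A →ₐ[K] R} {x y z : R}
    (hR : IsAmbiskew α u ι x y) (hz : z = x * y - ι u) (m : ℕ) (hm : 1 ≤ m) :
    ∃ I : TwoSidedIdeal R, y ^ m ∈ I ∧ ∀ p : K[X], aeval z p ∈ I →
      ∃ a : A, aeval (-(⇑α)^[m] u) p = (u - (⇑α)^[m] u) * a := by
  obtain ⟨Θ, hΘι, hΘx, hΘy⟩ := hR.exists_lift (verma_rel α u hR.ucentral)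
  obtain ⟨n, rfl⟩ : ∃ n, m = n + 1 := ⟨m - 1, by omega⟩
  set w : A := (⇑α.symm)^[n] u - α u with hw
  have hwc : ∀ a, w * a = a * w := by
    intro a
    have h1 := iterate_central α.symm hR.ucentral n a
    have h2 := iterate_central α hR.ucentral 1 a
    rw [Function.iterate_one] at h2
    rw [hw, sub_mul, mul_sub, h1, h2]
  let N : (ℕ → A) → Prop := fun f => ∀ i < n + 1, ∃ a, f i = w * a
  have N0 : N 0 := fun i _ => ⟨0, by simp⟩
  have Nadd : ∀ f g, N f → N g → N (f + g) := by
    intro f g hf hg i hi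
    obtain ⟨a, ha⟩ := hf i hi
    obtain ⟨b, hb⟩ := hg i hi
    exact ⟨a + b, by rw [Pi.add_apply, ha, hb, mul_add]⟩
  have Na : ∀ a f, N f → N (Θ (ι a) f) := by
    intro a f hf i hi
    obtain ⟨b, hb⟩ := hf i hi
    exact ⟨(⇑α.symm)^[i] a * b, by
      rw [hΘι, vermaA_apply, hb, ← mul_assoc, ← hwc, mul_assoc]⟩
  have Ny : ∀ k f, N f → N (Θ (y ^ k) f) := by
    intro k
    induction k with
    | zero => intro f hf; simpa using hf
    | succ k ih =>
      intro f hf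
      rw [pow_succ, map_mul, end_mul_apply]
      refine ih _ fun i hi => ?_
      rw [hΘy]
      cases i with
      | zero => exact ⟨0, by rw [vermaY_zero, mul_zero]⟩
      | succ i => exact hf i (by omega)
  have Nx : ∀ k f, N f → N (Θ (x ^ k) f) := by
    intro k
    induction k with
    | zero => intro f hf; simpa using hf
    | succ k ih =>
      intro f hf
      rw [pow_succ, map_mul, end_mul_apply]
      refine ih _ fun i hi => ?_
      rw [hΘx, vermaX_apply]
      by_cases h : i + 1 < n + 1
      · obtain ⟨b, hb⟩ := hf _ h
        exact ⟨((⇑α.symm)^[i] u - α u) * b, by rw [hb, ← mul_assoc, ← hwc, mul_assoc]⟩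
      · -- At the boundary `i = m − 1` the action of `x` itself supplies the factor `w`.
        obtain rfl : i = n := by omega
        exact ⟨_, rfl⟩
  have Nall : ∀ r f, N f → N (Θ r f) := by
    intro r
    refine hR.induction (P := fun r => ∀ f, N f → N (Θ r f)) ?_ ?_ ?_ r
    · intro f _
      simpa using N0
    · intro a b ha hb f hf
      rw [map_add, end_add_apply]
      exact Nadd _ _ (ha f hf) (hb f hf)
    · intro a i k f hf
      rw [map_mul, map_mul, end_mul_apply, end_mul_apply]
      exact Na _ _ (Ny _ _ (Nx _ _ hf))
  refine ⟨TwoSidedIdeal.mk' {r | ∀ f, N (Θ r f)} (fun f => by simpa using N0) ?_ ?_ ?_ ?_, ?_, ?_⟩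
  · intro r s hr hs f
    rw [map_add, end_add_apply]
    exact Nadd _ _ (hr f) (hs f)
  · intro r hr f i hi
    obtain ⟨a, ha⟩ := hr f i hi
    refine ⟨-a, ?_⟩
    rw [map_neg, mul_neg, ← ha]
    rfl
  · intro r s hs f
    rw [map_mul, end_mul_apply]
    exact Nall _ _ (hs f)
  · intro r s hr f
    rw [map_mul, end_mul_apply]
    exact hr _
  · rw [TwoSidedIdeal.mem_mk']
    intro f i hi
    have : ∀ k, ∀ f : ℕ → A, ∀ i < k, (vermaY A ^ k) f i = 0 := by
      intro k
      induction k with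
      | zero => intro f i hi; omega
      | succ k ih =>
        intro f i hi
        rw [pow_succ', end_mul_apply]
        cases i with
        | zero => exact vermaY_zero _
        | succ i => rw [vermaY_succ]; exact ih f i (by omega)
    exact ⟨0, by rw [map_pow, hΘy, this _ f i hi, mul_zero]⟩
  · intro p hp
    rw [TwoSidedIdeal.mem_mk'] at hp
    have hΘz : ∀ f i, Θ z f i = -α u * f i := by
      intro f i
      rw [hz, map_sub, map_mul, hΘx, hΘy, hΘι]
      change (vermaX α u (vermaY A f)) i - vermaA α u f i = _
      rw [vermaX_apply, vermaY_succ, vermaA_apply, ← sub_mul]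
      congr 1
      abel
    have hΘzn : ∀ (k : ℕ) f i, Θ (z ^ k) f i = (-α u) ^ k * f i := by
      intro k
      induction k with
      | zero => intro f i; simp
      | succ k ih =>
        intro f i
        rw [pow_succ, map_mul, end_mul_apply, ih, hΘz, ← mul_assoc, ← pow_succ]
    have hev : ∀ (q : K[X]) f i, Θ (aeval z q) f i = aeval (-α u) q * f i := by
      intro q f i
      induction q using Polynomial.induction_on' with
      | add p q hp hq =>
        rw [map_add, map_add, map_add, end_add_apply, Pi.add_apply, hp, hq, add_mul]
      | monomial k c =>
        rw [aeval_monomial, aeval_monomial, map_mul, end_mul_apply, ← ι.commutes, hΘι,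
          vermaA_apply, hΘzn, Function.iterate_fixed (α.symm.commutes c) i, mul_assoc]
    obtain ⟨a, ha⟩ := hp (fun _ => 1) 0 (by omega)
    rw [hev, mul_one] at ha
    have hg : ∀ b, (α ^ n) b = (⇑α)^[n] b := fun b => by rw [AlgEquiv.coe_pow]
    have h1 : (α ^ n) (-α u) = -(⇑α)^[n + 1] u := by
      rw [map_neg, hg, Function.iterate_succ_apply]
    have h2 : (α ^ n) w = u - (⇑α)^[n + 1] u := by
      rw [hw, map_sub, hg, hg, Function.iterate_succ_apply,
        Function.LeftInverse.iterate α.apply_symm_apply n u]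
    refine ⟨(α ^ n) a, ?_⟩
    rw [← h1, ← h2, ← map_mul, ← ha]
    exact aeval_algHom_apply (α ^ n : A ≃ₐ[K] A) (-α u) p

/-! ### Descending the power of `y` -/

/-- If `p(z)yⁿ ∈ I` with `p ≠ 0` then `I` meets `K[z] \ {0}`. Multiplying `p(z)yⁿ⁺¹` by `x` on
the left yields `p(z)(z + u)yⁿ`, and commuting it with `x` yields `p(z)v^(n+1)yⁿ`; since
`q(u) ∈ v^(n+1)A` and `q(u) ≡ q(−z)` modulo `z + u`, also `p(z)q(−z)yⁿ ∈ I`. -/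
theorem exists_aeval_mem {K A R : Type*} [Field K] [Ring A] [Algebra K A] [Ring R]
    [Algebra K R] {α : A ≃ₐ[K] A} {u : A} {ι : A →ₐ[K] R} {x y z : R}
    (hR : IsAmbiskew α u ι x y) (hz : z = x * y - ι u)
    (hzc : ∀ p : K[X], p ≠ 0 → ∀ r : R, aeval z p * r = r * aeval z p)
    (H : ∀ m : ℕ, 1 ≤ m → ∃ p : K[X], p ≠ 0 ∧ ∃ a : A, aeval u p = (u - (⇑α)^[m] u) * a)
    (I : TwoSidedIdeal R) (n : ℕ) (p : K[X]) (hp : p ≠ 0) (hI : aeval z p * y ^ n ∈ I) :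
    ∃ q : K[X], q ≠ 0 ∧ aeval z q ∈ I := by
  induction n generalizing p with
  | zero => exact ⟨p, hp, by simpa using hI⟩
  | succ n ih =>
    obtain ⟨q, hq, a, ha⟩ := H (n + 1) (by omega)
    set P := aeval z p
    have hPc : ∀ r, P * r = r * P := hzc p hp
    have hvc : ∀ b, (u - (⇑α)^[n + 1] u) * b = b * (u - (⇑α)^[n + 1] u) := fun b => by
      rw [sub_mul, mul_sub, hR.ucentral, iterate_central α hR.ucentral]
    have hzu : x * y = ι u + z := by rw [hz]; abel
    have m1 : (ι u + z) * (P * y ^ n) ∈ I := by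
      have := I.mul_mem_left x _ hI
      rw [← mul_assoc, ← hPc, mul_assoc, pow_succ', ← mul_assoc x, hzu, ← mul_assoc, hPc,
        mul_assoc] at this
      exact this
    have m2 : ι (u - (⇑α)^[n + 1] u) * (P * y ^ n) ∈ I := by
      have h := I.sub_mem (I.mul_mem_left x _ hI) (I.mul_mem_right _ x hI)
      have e := hR.rel.x_mul_pow_y n
      rw [← mul_assoc, ← hPc, mul_assoc, mul_assoc, e, ← mul_sub, add_sub_cancel_left,
        RingHom.coe_coe, ← mul_assoc, hPc, mul_assoc] at h
      exact h
    have m3 : aeval (ι u) q * (P * y ^ n) ∈ I := by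
      rw [aeval_algHom_apply, ha, hvc, map_mul, mul_assoc]
      exact I.mul_mem_left _ _ m2
    have hcz : Commute (ι u) (-z) := by
      have := hzc X X_ne_zero (ι u)
      rw [aeval_X] at this
      exact Commute.neg_right (Eq.symm this)
    obtain ⟨d, hd⟩ := aeval_eq_add_mul_sub hcz q
    have m4 : aeval (-z) q * (P * y ^ n) ∈ I := by
      have h := I.sub_mem m3 (I.mul_mem_left d _ m1)
      rw [← mul_assoc d, ← sub_mul, hd, sub_neg_eq_add, add_sub_cancel_right] at h
      exact h
    refine ih (q.comp (-X) * p) (mul_ne_zero (comp_neg_X_eq_zero_iff.not.2 hq) hp) ?_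
    rw [map_mul, aeval_comp, map_neg, aeval_X, mul_assoc]
    exact m4

/-! ### The simplicity criterion -/

/-- Proposition 2.2: simplicity criterion for the localization of a conformal ambiskew
polynomial ring at the nonzero elements of `K[z]`, where `z = xy − u` is the Casimir
element. -/
theorem stmt1 {K A R S C : Type*} [Field K] [IsAlgClosed K]
    [Ring A] [Algebra K A] [Ring R] [Algebra K R] [Ring S] [Algebra K S] [Ring C]
    (α : A ≃ₐ[K] A) (u : A) (hu : ∀ a : A, u * a = a * u)
    (ι : A →ₐ[K] R) (x y : R) (hR : IsAmbiskew α u ι x y)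
    -- the skew Laurent polynomial ring `A[y^{±1}; α]` is simple with centre `K`
    (ιS : A →ₐ[K] S) (yS : Sˣ) (hS : IsSkewLaurent α ιS yS)
    (hSsimple : IsSimpleRing S)
    (hScentre : ∀ s : S, (∀ w : S, s * w = w * s) → ∃ k : K, s = algebraMap K S k)
    -- the Casimir element `z = xy − u` and the set `Z = K[z] \ {0}`
    (z : R) (hz : z = x * y - ι u)
    (Z : Set R) (hZ : Z = {r : R | ∃ p : Polynomial K, p ≠ 0 ∧ r = Polynomial.aeval z p})
    -- `φ : R →+* C` exhibits `C` as the central localization `R_Z`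
    (φ : R →+* C) (hφ : IsCentralLocalization Z φ) :
    IsSimpleRing C ↔
      ∀ m : ℕ, 1 ≤ m → ∃ p : Polynomial K, p ≠ 0 ∧
        ∃ a : A, Polynomial.aeval u p = (u - (⇑α)^[m] u) * a := by
  have hzc : ∀ p : K[X], p ≠ 0 → ∀ r : R, aeval z p * r = r * aeval z p := fun p hp r =>
    hφ.central _ (by rw [hZ]; exact ⟨p, hp, rfl⟩) r
  obtain ⟨θ, hθι, hθx, hθy⟩ := hR.exists_lift (hS.rel hu)
  have hθι' : ∀ a, θ (ι a) = Polynomial.C (ιS a) := hθι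
  have hθz : θ z = X := by
    have h : Polynomial.C (ιS (α u)) * Polynomial.C (yS : S) = Polynomial.C (yS : S) * Polynomial.C (ιS u) := by
      rw [← C_mul, ← C_mul, hS.comm]
    rw [hz, map_sub, map_mul, hθx, hθy, hθι', mul_assoc, add_mul, h, X_mul_C, ← mul_add,
      ← mul_assoc, ← C_mul, Units.inv_mul, C_1, one_mul, add_sub_cancel_right]
  have hθp : ∀ p : K[X], θ (aeval z p) = p.map (algebraMap K S) := by
    intro p
    have hring : θ.comp (algebraMap K R) = (Polynomial.C : S →+* S[X]).comp (algebraMap K S) := by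
      ext k
      rw [RingHom.comp_apply, ← ι.commutes, hθι', ιS.commutes, RingHom.comp_apply]
    rw [aeval_def, hom_eval₂, hring, hθz]
    rfl
  have hmap : ∀ p : K[X], p ≠ 0 → p.map (algebraMap K S) ≠ 0 := fun p hp =>
    (Polynomial.map_ne_zero_iff (algebraMap K S).injective).2 hp
  have hinj : ∀ r, θ r = 0 → r = 0 := eq_zero_of_laurent_eq_zero hR hS θ hθι' hθx hθy
  have hφ0 : ∀ r, (∀ p : K[X], p ≠ 0 → θ r * p.map (algebraMap K S) ≠ 0) → φ r ≠ 0 := by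
    intro r hr h
    obtain ⟨s, hs, h0⟩ := (hφ.ker r).1 h
    rw [hZ] at hs
    obtain ⟨p, hp, rfl⟩ := hs
    apply hr p hp
    rw [← hθp, ← map_mul, h0, map_zero]
  constructor
  · intro hC m hm
    obtain ⟨I, hyI, hI⟩ := exists_ideal_pow_y_mem hR hz m hm
    -- The extension of `I` to the localization.
    let T₀ : Set C := {c | ∃ s ∈ Z, ∃ r ∈ I, c * φ s = φ r}
    have hZmul : ∀ s ∈ Z, ∀ t ∈ Z, s * t ∈ Z := by
      rw [hZ]
      rintro _ ⟨p, hp, rfl⟩ _ ⟨q, hq, rfl⟩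
      exact ⟨p * q, mul_ne_zero hp hq, by rw [map_mul]⟩
    have hZ1 : (1 : R) ∈ Z := by rw [hZ]; exact ⟨1, one_ne_zero, by simp⟩
    have hφc : ∀ s ∈ Z, ∀ c : C, c * φ s = φ s * c := by
      intro s hs c
      obtain ⟨r, t, ht, h⟩ := hφ.surj c
      obtain ⟨t', ht'⟩ := hφ.isUnit t ht
      rw [← ht', ← Units.eq_mul_inv_iff_mul_eq] at h
      have h1 : Commute (φ s) (φ r) := by
        change _ * _ = _ * _
        rw [← map_mul, hφ.central s hs, map_mul]
      have h2 : Commute (φ s) (t' : C) := by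
        rw [ht']
        change _ * _ = _ * _
        rw [← map_mul, hφ.central s hs, map_mul]
      rw [h]
      exact ((h1.mul_right h2.units_inv_right).eq).symm
    let T : TwoSidedIdeal C := TwoSidedIdeal.mk' T₀
      ⟨1, hZ1, 0, I.zero_mem, by simp⟩
      (by
        rintro c d ⟨s, hs, r, hr, h⟩ ⟨t, ht, q, hq, h'⟩
        refine ⟨s * t, hZmul s hs t ht, r * t + q * s,
          I.add_mem (I.mul_mem_right _ _ hr) (I.mul_mem_right _ _ hq), ?_⟩
        rw [add_mul, map_add, map_mul φ r, map_mul φ q, ← h, ← h', mul_assoc, mul_assoc,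
          ← map_mul, ← map_mul, hφ.central s hs t])
      (by
        rintro c ⟨s, hs, r, hr, h⟩
        exact ⟨s, hs, -r, I.neg_mem hr, by rw [neg_mul, h, map_neg]⟩)
      (by
        rintro d c ⟨s, hs, r, hr, h⟩
        obtain ⟨q, t, ht, h'⟩ := hφ.surj d
        refine ⟨t * s, hZmul t ht s hs, q * r, I.mul_mem_left _ _ hr, ?_⟩
        rw [map_mul, map_mul, ← h, ← h', mul_assoc d, ← mul_assoc c, hφc t ht c]
        simp only [mul_assoc])
      (by
        rintro c d ⟨s, hs, r, hr, h⟩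
        obtain ⟨q, t, ht, h'⟩ := hφ.surj d
        refine ⟨s * t, hZmul s hs t ht, r * q, I.mul_mem_right _ _ hr, ?_⟩
        rw [map_mul, map_mul, ← h, ← h', mul_assoc c, mul_assoc c, ← mul_assoc d, hφc s hs d]
        simp only [mul_assoc])
    have hyne : φ (y ^ m) ≠ 0 := by
      apply hφ0
      intro p hp h0
      apply hmap p hp
      have hu' : IsUnit (θ (y ^ m)) := by
        rw [map_pow, hθy]
        exact (yS.isUnit.map (Polynomial.C : S →+* S[X])).pow m
      exact (hu'.mul_right_eq_zero).1 h0
    have h1 : (1 : C) ∈ T := IsSimpleRing.one_mem_of_ne_zero_mem T hyne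
      ((TwoSidedIdeal.mem_mk' ..).2 ⟨1, hZ1, y ^ m, hyI, by simp⟩)
    obtain ⟨s, hs, r, hr, h⟩ := (TwoSidedIdeal.mem_mk' ..).1 h1
    have hsr : φ (s - r) = 0 := by rw [map_sub, ← h, one_mul, sub_self]
    obtain ⟨t, ht, h0⟩ := (hφ.ker _).1 hsr
    have hst : s * t ∈ I := by
      rw [sub_mul, sub_eq_zero] at h0
      rw [h0]
      exact I.mul_mem_right _ _ hr
    obtain ⟨p, hp, hps⟩ : ∃ p : K[X], p ≠ 0 ∧ s * t = aeval z p := by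
      have := hZmul s hs t ht
      rwa [hZ] at this
    rw [hps] at hst
    obtain ⟨a, ha⟩ := hI p hst
    refine ⟨p.comp (-X), comp_neg_X_eq_zero_iff.not.2 hp, ?_⟩
    obtain ⟨d, hd⟩ := aeval_eq_add_mul_sub (hu ((⇑α)^[m] u)) (p.comp (-X))
    have hvc : d * (u - (⇑α)^[m] u) = (u - (⇑α)^[m] u) * d := by
      rw [sub_mul, mul_sub, hu, iterate_central α hu]
    refine ⟨a + d, ?_⟩
    rw [hd, aeval_comp (x := (⇑α)^[m] u), map_neg, aeval_X, ha, hvc, mul_add]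
  · intro H
    have hone : (1 : C) ≠ 0 := by
      rw [← map_one φ]
      apply hφ0
      intro p hp
      rw [map_one, one_mul]
      exact hmap p hp
    have : Nontrivial C := ⟨1, 0, hone⟩
    apply IsSimpleRing.of_eq_bot_or_eq_top
    intro T
    rw [or_iff_not_imp_left]
    intro hT
    obtain ⟨c, hc, hc0⟩ : ∃ c ∈ T, c ≠ 0 := by
      by_contra! hall
      exact hT (le_bot_iff.1 fun c hc => by rw [hall c hc]; exact TwoSidedIdeal.zero_mem _)
    obtain ⟨r, s, hs, h⟩ := hφ.surj c
    have hr : φ r ∈ T := h ▸ T.mul_mem_right _ _ hc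
    have hr0 : r ≠ 0 := by
      rintro rfl
      rw [map_zero] at h
      exact hc0 (((hφ.isUnit s hs).mul_left_eq_zero).1 h)
    let I : TwoSidedIdeal R := T.comap φ
    obtain ⟨p, hp, n, hpn⟩ := exists_pow_mem hScentre hS θ hθι' hθy hinj z hθz hθp I r
      (TwoSidedIdeal.mem_comap (f := φ) |>.2 hr) hr0
    obtain ⟨q, hq, hqI⟩ := exists_aeval_mem hR hz hzc H I n p hp hpn
    have hqT : φ (aeval z q) ∈ T := TwoSidedIdeal.mem_comap (f := φ) |>.1 hqI
    obtain ⟨w, hw⟩ := hφ.isUnit (aeval z q) (by rw [hZ]; exact ⟨q, hq, rfl⟩)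
    rw [← TwoSidedIdeal.one_mem_iff]
    have := T.mul_mem_left ((w⁻¹ : Cˣ) : C) _ hqT
    rwa [← hw, Units.inv_mul] at this
end
end

section
/- Let either (i) char K = 0, A = K[t] the polynomial algebra and α the K-automorphism of A with α(t) = t + μ for some μ ∈ K \ {0}, or (ii) A = K[t^{±1}] the Laurent polynomial algebra and α the K-automorphism of A with α(t) = qt where q ∈ K \ {0} is not a root of unity. Let u ∈ A \ K and let R = R(A, α, u − α(u), 1) be the corresponding conformal ambiskew polynomial ring with Casimir element z = xy − u. Then the height one prime two-sided ideals of R are exactly the ideals (z − λ)R for λ ∈ K, and every nonzero two-sided ideal of R has nonzero intersection with the subalgebra K[z]. -/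
/-!
By `y x = z + α(u)` and `x y = z + u`, the ring `R` is a generalized Weyl algebra over `A[z]`, with
`α` extended by `α(z) = z`: it is free over `A[z]` on the monomials `vₖ`, equal to `yᵏ` for `k ≥ 0`
and to `x⁻ᵏ` for `k < 0` (`weylSum_bijective`). Moreover `v_k v_{-k}` is a product of elements
`z + α^i(u)`, where `1 ≤ i` if `k ≥ 0` and `i ≤ 0` if `k < 0`.

Since `α` has infinite order on `u`, the operation `r ↦ α^j(u) r - r u` separates the components
of `r`. Hence a two-sided ideal not contained in `πR`, for `π = 0` or `π = z - λ`, contains modulo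
`πR` an element of `A[z]` not divisible by `π` (`exists_map_mem_of_not_le`). For `π = z - λ` this
shows that `(z - λ)R` is prime (`isPrime_centralIdeal`). For `π = 0` it shows that a nonzero ideal
`T` meets `A[z]` in a nonzero ideal `I`.

The ideal `I` satisfies `α^n(I) y^n x^n ⊆ I` and `α^{-n}(I) x^n y^n ⊆ I`. If `I` did not meet
`K[z]`, it would lie in a prime `Q` of `A[z]` not meeting `K[z]`
(`exists_map_mem_of_twisted_stable`). If `Q` contains `z + α^i(u)` and `z + α^j(u)` with
`i ≥ 1 > j`, it contains the nonzero element `α^i(u) - α^j(u)` of `A`, modulo which `α^i(u)`, and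
hence `z` modulo `Q`, is algebraic over `K`: a contradiction. Otherwise `Q` contains all translates
`α^n(I)` in one direction; as `α` is locally algebraic, those translates span an eigenvector of
`α`, which has the form `w p(z)` with `w` a unit of `A` and `p` a polynomial over `K`, so `p(z)`
lies in `Q` (`exists_map_mem_of_forall_translate`), again a contradiction.

Thus every nonzero prime contains some `p(z) ≠ 0`, and, `z` being central and `K` algebraically
closed, some `z - λ`. Both assertions on height one primes follow from this.
-/

noncomputable section

/-! ### The coefficient algebra and its automorphism -/

section Coefficients

open Polynomial

variable {K A : Type*} [Field K] [CommRing A] [Algebra K A]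

/-- The alternative in the statement: `A ≅ K[t]` in characteristic zero with `α(t) = t + μ`,
or `A ≅ K[t^{±1}]` with `α(t) = q t`, where `q` is not a root of unity. -/
def ShiftOrScale (α : A ≃ₐ[K] A) : Prop :=
  (CharZero K ∧ ∃ (e : A ≃ₐ[K] Polynomial K) (μ : K), μ ≠ 0 ∧
        e (α (e.symm Polynomial.X)) = Polynomial.X + Polynomial.C μ)
      ∨ (∃ (e : A ≃ₐ[K] LaurentPolynomial K) (q : K), q ≠ 0 ∧
        (∀ n : ℕ, 0 < n → q ^ n ≠ 1) ∧
        e (α (e.symm (LaurentPolynomial.T 1))) = q • LaurentPolynomial.T 1)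

/-- The properties of `(A, α)` on which the argument rests: every proper quotient of `A` is
algebraic over `K`, the operator `α` is locally algebraic on `A`, and each eigenspace of `α`
lies in the `K`-line of a unit of `A`. -/
structure TwistGood (α : A ≃ₐ[K] A) : Prop where
  alg : ∀ b : A, b ≠ 0 → ∀ a : A, ∃ p : K[X], p ≠ 0 ∧ b ∣ aeval a p
  locfin : ∀ a : A, ∃ p : K[X], p ≠ 0 ∧ aeval α.toLinearMap p a = 0
  eig : ∀ c : K, ∃ w : Aˣ, ∀ a : A, α a = c • a → ∃ k : K, a = k • (w : A)

theorem ShiftOrScale.isDomain {α : A ≃ₐ[K] A} (h : ShiftOrScale α) : IsDomain A := by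
  rcases h with ⟨_, e, -⟩ | ⟨e, -⟩
  · exact e.toMulEquiv.isDomain
  · exact e.toMulEquiv.isDomain

theorem shift_apply {α : A ≃ₐ[K] A} {e : A ≃ₐ[K] K[X]} {μ : K}
    (h : e (α (e.symm X)) = X + C μ) (a : A) : e (α a) = taylor μ (e a) := by
  have : (((e.symm.trans (α.trans e)) : K[X] ≃ₐ[K] K[X]) : K[X] →ₐ[K] K[X]) =
      (taylorEquiv μ : K[X] →ₐ[K] K[X]) := by
    apply Polynomial.algHom_ext
    simp [h]
  have := DFunLike.congr_fun this (e a)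
  simpa using this

theorem scale_apply_T {α : A ≃ₐ[K] A} {e : A ≃ₐ[K] LaurentPolynomial K} {q : K} (hq : q ≠ 0)
    (h : e (α (e.symm (LaurentPolynomial.T 1))) = q • LaurentPolynomial.T 1) (n : ℤ) :
    e (α (e.symm (LaurentPolynomial.T n))) = q ^ n • LaurentPolynomial.T n := by
  have hpos : ∀ n : ℕ, e (α (e.symm (LaurentPolynomial.T (n : ℤ)))) =
      q ^ n • LaurentPolynomial.T (n : ℤ) := by
    intro n
    have := congrArg (· ^ n) h
    simpa only [← map_pow, LaurentPolynomial.T_pow, _root_.smul_pow, mul_one] using this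
  obtain ⟨m, rfl | rfl⟩ := n.eq_nat_or_neg
  · simpa using hpos m
  · -- `T m` is invertible with inverse `T (-m)`, and both sides are inverse to its image
    have h1 : e (α (e.symm (LaurentPolynomial.T (-(m : ℤ))))) *
        (q ^ m • LaurentPolynomial.T (m : ℤ)) = 1 := by
      rw [← hpos m]
      rw [← map_mul, ← map_mul, ← map_mul, ← LaurentPolynomial.T_add, neg_add_cancel,
        LaurentPolynomial.T_zero, map_one, map_one, map_one]
    have h2 : (q ^ m • LaurentPolynomial.T (m : ℤ)) *
        (q ^ (-(m : ℤ)) • LaurentPolynomial.T (-(m : ℤ))) = (1 : LaurentPolynomial K) := by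
      rw [smul_mul_smul_comm, ← LaurentPolynomial.T_add]
      simp [hq]
    exact left_inv_eq_right_inv h1 h2

theorem scale_apply_coeff {α : A ≃ₐ[K] A} {e : A ≃ₐ[K] LaurentPolynomial K} {q : K} (hq : q ≠ 0)
    (h : e (α (e.symm (LaurentPolynomial.T 1))) = q • LaurentPolynomial.T 1) (a : A) (n : ℤ) :
    (e (α a)).coeff n = q ^ n * (e a).coeff n := by
  obtain ⟨f, rfl⟩ := e.symm.surjective a
  induction f using LaurentPolynomial.induction_on' with
  | add p q hp hq => simp only [map_add, AddMonoidAlgebra.coeff_add, Finsupp.add_apply, hp, hq, mul_add]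
  | C_mul_T m a =>
    have : (LaurentPolynomial.C a * LaurentPolynomial.T m : LaurentPolynomial K) =
        a • LaurentPolynomial.T m := by
      rw [LaurentPolynomial.smul_eq_C_mul]
    rw [this, map_smul, map_smul, map_smul, scale_apply_T hq h]
    simp only [map_smul, AlgEquiv.apply_symm_apply, AddMonoidAlgebra.coeff_smul, Finsupp.smul_apply,
      LaurentPolynomial.T_apply, smul_eq_mul]
    split_ifs with hmn
    · subst hmn; ring
    · ring

theorem ShiftOrScale.symm {α : A ≃ₐ[K] A} (h : ShiftOrScale α) : ShiftOrScale α⁻¹ := by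
  rcases h with ⟨h0, e, μ, hμ, h⟩ | ⟨e, q, hq, hq', h⟩
  · refine Or.inl ⟨h0, e, -μ, neg_ne_zero.mpr hμ, ?_⟩
    apply e.symm.injective
    apply α.injective
    apply e.injective
    have : α (α⁻¹ (e.symm X)) = e.symm X := AlgEquiv.apply_symm_apply α _
    simp only [AlgEquiv.symm_apply_apply, this, AlgEquiv.apply_symm_apply, map_add, h]
    rw [← algebraMap_eq, AlgEquiv.commutes, AlgEquiv.commutes, AlgEquiv.commutes]
    simp
  · refine Or.inr ⟨e, q⁻¹, inv_ne_zero hq, fun n hn => ?_, ?_⟩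
    · simpa using hq' n hn
    apply e.symm.injective
    apply α.injective
    apply e.injective
    have : α (α⁻¹ (e.symm (LaurentPolynomial.T 1))) = e.symm (LaurentPolynomial.T 1) :=
      AlgEquiv.apply_symm_apply α _
    simp only [AlgEquiv.symm_apply_apply, this, AlgEquiv.apply_symm_apply, map_smul, h, smul_smul,
      inv_mul_cancel₀ hq, one_smul]

theorem ShiftOrScale.pow {α : A ≃ₐ[K] A} (h : ShiftOrScale α) (n : ℕ) (hn : 0 < n) :
    ShiftOrScale (α ^ n) := by
  rcases h with ⟨h0, e, μ, hμ, h⟩ | ⟨e, q, hq, hq', h⟩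
  · refine Or.inl ⟨h0, e, n * μ, mul_ne_zero (Nat.cast_ne_zero.mpr hn.ne') hμ, ?_⟩
    clear hn
    induction n with
    | zero => simp
    | succ n ih =>
      rw [pow_succ', AlgEquiv.mul_apply, shift_apply h, ih]
      simp only [map_add, taylor_X, taylor_C, Nat.cast_succ, add_mul, one_mul]
      ring
  · refine Or.inr ⟨e, q ^ n, pow_ne_zero _ hq, fun m hm => ?_, ?_⟩
    · rw [← pow_mul]; exact hq' _ (Nat.mul_pos hn hm)
    clear hn
    induction n with
    | zero => simp
    | succ n ih =>
      rw [pow_succ', AlgEquiv.mul_apply]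
      have : (α ^ n) (e.symm (LaurentPolynomial.T 1)) = q ^ n • e.symm (LaurentPolynomial.T 1) := by
        rw [← map_smul, ← ih, AlgEquiv.symm_apply_apply]
      rw [this, map_smul, map_smul, h, smul_smul, pow_succ]

theorem ShiftOrScale.zpow {α : A ≃ₐ[K] A} (h : ShiftOrScale α) (n : ℤ) (hn : n ≠ 0) :
    ShiftOrScale (α ^ n) := by
  obtain ⟨m, rfl | rfl⟩ := n.eq_nat_or_neg
  · rw [zpow_natCast]; exact h.pow m (by omega)
  · rw [zpow_neg, zpow_natCast]; exact (h.pow m (by omega)).symm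

theorem exists_dvd_aeval_of_isIntegral {b : A}
    (h : ∀ a : A, IsIntegral K (Ideal.Quotient.mk (Ideal.span {b}) a)) (a : A) :
    ∃ p : K[X], p ≠ 0 ∧ b ∣ aeval a p := by
  obtain ⟨p, hp, hpa⟩ := isAlgebraic_iff_isIntegral.mpr (h a)
  refine ⟨p, hp, ?_⟩
  rw [← Ideal.mem_span_singleton, ← Ideal.Quotient.eq_zero_iff_mem, ← hpa,
    ← Ideal.Quotient.mkₐ_eq_mk K, aeval_algHom_apply]

theorem isIntegral_mk_of_aeval_eq {b t c : A} {p : K[X]} (hp : p ≠ 0) (h : aeval t p = b * c) :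
    IsIntegral K (Ideal.Quotient.mk (Ideal.span {b}) t) := by
  refine isAlgebraic_iff_isIntegral.mp ⟨p, hp, ?_⟩
  rw [← Ideal.Quotient.mkₐ_eq_mk K, aeval_algHom_apply, h, Ideal.Quotient.mkₐ_eq_mk,
    Ideal.Quotient.eq_zero_iff_mem]
  exact Ideal.mul_mem_right _ _ (Ideal.mem_span_singleton_self b)

theorem ShiftOrScale.alg {α : A ≃ₐ[K] A} (h : ShiftOrScale α) (b : A) (hb : b ≠ 0) (a : A) :
    ∃ p : K[X], p ≠ 0 ∧ b ∣ aeval a p := by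
  apply exists_dvd_aeval_of_isIntegral
  rcases h with ⟨h0, e, -⟩ | ⟨e, -⟩
  · have ht : IsIntegral K (Ideal.Quotient.mkₐ K (Ideal.span {b}) (e.symm X)) :=
      isIntegral_mk_of_aeval_eq (c := 1) (p := e b) (by simpa using hb)
        (by rw [aeval_algHom_apply e.symm X (e b)]; simp)
    intro a
    have : a = aeval (e.symm X) (e a) := by
      rw [aeval_algHom_apply e.symm X (e a)]; simp
    rw [this, ← Ideal.Quotient.mkₐ_eq_mk K, ← aeval_algHom_apply]
    induction e a using Polynomial.induction_on' with
    | add p q hp hq => rw [map_add]; exact hp.add hq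
    | monomial n c =>
      rw [aeval_monomial]
      exact isIntegral_algebraMap.mul (ht.pow n)
  · have key : ∀ g : LaurentPolynomial K ≃ₐ[K] LaurentPolynomial K,
        IsIntegral K (Ideal.Quotient.mkₐ K (Ideal.span {b})
          (e.symm (g.symm (LaurentPolynomial.T 1)))) := by
      intro g
      obtain ⟨n, f, hf⟩ := LaurentPolynomial.exists_T_pow (g (e b))
      refine isIntegral_mk_of_aeval_eq (c := e.symm (g.symm (LaurentPolynomial.T n))) (p := f) ?_ ?_
      · rintro rfl
        rw [map_zero] at hf
        have := (LaurentPolynomial.isUnit_T (R := K) n).mul_left_eq_zero.mp hf.symm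
        exact hb (by simpa using this)
      · apply e.injective
        apply g.injective
        rw [← aeval_algHom_apply, ← aeval_algHom_apply]
        simp only [AlgEquiv.apply_symm_apply, map_mul, ← hf]
        rw [← toLaurent_X, ← coe_toLaurentAlg, aeval_algHom_apply, aeval_X_left_apply]
    have h1 := key AlgEquiv.refl
    have h2 := key LaurentPolynomial.invert
    intro a
    obtain ⟨f, rfl⟩ := e.symm.surjective a
    rw [← Ideal.Quotient.mkₐ_eq_mk K]
    have hT : ∀ n : ℤ, IsIntegral K (Ideal.Quotient.mkₐ K (Ideal.span {b})
          (e.symm (LaurentPolynomial.T n))) := by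
      intro n
      obtain ⟨m, rfl | rfl⟩ := n.eq_nat_or_neg
      · have := h1.pow m
        simpa [← map_pow, LaurentPolynomial.T_pow] using this
      · have := h2.pow m
        simpa [← map_pow, LaurentPolynomial.T_pow] using this
    induction f using LaurentPolynomial.induction_on' with
    | add p q hp hq => simpa only [map_add] using hp.add hq
    | C_mul_T m a =>
      rw [← LaurentPolynomial.smul_eq_C_mul, map_smul, map_smul]
      exact (hT m).smul a

theorem ShiftOrScale.locfin {α : A ≃ₐ[K] A} (h : ShiftOrScale α) (a : A) :
    ∃ p : K[X], p ≠ 0 ∧ aeval α.toLinearMap p a = 0 := by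
  rcases h with ⟨h0, e, μ, hμ, h⟩ | ⟨e, q, hq, hq', h⟩
  · -- `α - 1` lowers the degree, hence is locally nilpotent
    have key : ∀ (n : ℕ) (a : A), (e a).degree < n →
        aeval α.toLinearMap ((X - C (1 : K)) ^ n) a = 0 := by
      intro n
      induction n with
      | zero =>
        intro a ha
        have : e a = 0 := by
          rw [← degree_eq_bot]
          simpa [Nat.WithBot.lt_zero_iff] using ha
        have : a = 0 := by simpa using this
        simp [this]
      | succ n ih =>
        intro a ha
        rw [pow_succ, map_mul, Module.End.mul_apply]
        apply ih
        by_cases h1 : a = 0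
        · simp [h1]
        have h2 : e ((aeval α.toLinearMap (X - C (1 : K))) a) = taylor μ (e a) - e a := by
          rw [← shift_apply h]; simp
        rw [h2]
        have h3' : e a ≠ 0 := by simpa using h1
        have hne : taylor μ (e a) ≠ 0 := by
          rw [← shift_apply h]; simpa using h1
        have h3 := degree_sub_lt_left (p := taylor μ (e a)) (q := e a) (degree_taylor _ _) hne
          (leadingCoeff_taylor _ _)
        rw [degree_taylor] at h3
        have h4 : (e a).degree ≤ n := by
          rw [← natDegree_lt_iff_degree_lt h3'] at ha
          exact degree_le_of_natDegree_le (by omega)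
        exact h3.trans_le h4
    refine ⟨(X - C (1 : K)) ^ ((e a).natDegree + 1), pow_ne_zero _ (X_sub_C_ne_zero _), key _ _ ?_⟩
    exact degree_le_natDegree.trans_lt (by exact_mod_cast Nat.lt_succ_self _)
  · obtain ⟨f, rfl⟩ := e.symm.surjective a
    induction f using LaurentPolynomial.induction_on' with
    | add f g hf hg =>
      obtain ⟨p, hp, hpf⟩ := hf
      obtain ⟨r, hr, hrg⟩ := hg
      refine ⟨p * r, mul_ne_zero hp hr, ?_⟩
      have h1 : aeval α.toLinearMap (p * r) (e.symm f) = 0 := by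
        rw [mul_comm, map_mul, Module.End.mul_apply, hpf, map_zero]
      have h2 : aeval α.toLinearMap (p * r) (e.symm g) = 0 := by
        rw [map_mul, Module.End.mul_apply, hrg, map_zero]
      rw [map_add e.symm, map_add, h1, h2, add_zero]
    | C_mul_T m a =>
      refine ⟨X - C (q ^ m), X_sub_C_ne_zero _, ?_⟩
      rw [← LaurentPolynomial.smul_eq_C_mul, map_smul, map_smul]
      have := congrArg e.symm (scale_apply_T hq h m)
      rw [AlgEquiv.symm_apply_apply, map_smul] at this
      simp [this]

theorem ShiftOrScale.eig {α : A ≃ₐ[K] A} (h : ShiftOrScale α) (c : K) :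
    ∃ w : Aˣ, ∀ a : A, α a = c • a → ∃ k : K, a = k • (w : A) := by
  rcases h with ⟨h0, e, μ, hμ, h⟩ | ⟨e, q, hq, hq', h⟩
  · refine ⟨1, fun a ha => ?_⟩
    by_cases h1 : a = 0
    · exact ⟨0, by simp [h1]⟩
    have h2 : taylor μ (e a) = c • e a := by rw [← shift_apply h, ha, map_smul]
    have h3 : e a ≠ 0 := by simpa using h1
    have hc : c = 1 := by
      have h4 := congrArg leadingCoeff h2
      rw [leadingCoeff_taylor, smul_eq_C_mul, leadingCoeff_mul, leadingCoeff_C] at h4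
      exact (mul_eq_right₀ (leadingCoeff_ne_zero.mpr h3)).mp h4.symm
    rw [hc, one_smul] at h2
    -- a polynomial fixed by the shift takes the same value at all the points `n * μ`
    have hval : ∀ n : ℕ, (e a).eval (n * μ) = (e a).eval 0 := by
      intro n
      induction n with
      | zero => simp
      | succ n ih =>
        rw [← ih]
        conv_rhs => rw [← h2]
        rw [taylor_eval]
        congr 1
        push_cast
        ring
    have hconst : e a = C ((e a).eval 0) := by
      apply Polynomial.eq_of_infinite_eval_eq
      refine Set.Infinite.mono ?_ (Set.infinite_range_of_injective (f := fun n : ℕ => (n : K) * μ) ?_)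
      · rintro _ ⟨n, rfl⟩
        simpa using hval n
      · intro m n hmn
        exact_mod_cast mul_right_cancel₀ hμ hmn
    refine ⟨(e a).eval 0, ?_⟩
    apply e.injective
    rw [Units.val_one, map_smul, map_one, smul_eq_C_mul, mul_one]
    exact hconst
  · have hinj : ∀ m n : ℤ, q ^ m = q ^ n → m = n := by
      have : ∀ k : ℤ, 0 < k → q ^ k ≠ 1 := by
        intro k hk
        lift k to ℕ using hk.le
        rw [zpow_natCast]
        exact hq' k (by exact_mod_cast hk)
      intro m n hmn
      rcases lt_trichotomy m n with hlt | heq | hgt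
      · exact absurd (by rw [zpow_sub₀ hq, hmn, div_self (zpow_ne_zero _ hq)]) (this (n - m) (by omega))
      · exact heq
      · exact absurd (by rw [zpow_sub₀ hq, hmn, div_self (zpow_ne_zero _ hq)]) (this (m - n) (by omega))
    have hunit : ∀ n : ℤ, IsUnit (e.symm (LaurentPolynomial.T n)) :=
      fun n => (LaurentPolynomial.isUnit_T n).map e.symm
    -- the eigenvalue `c` occurs only on the line of `T d` with `q ^ d = c`
    obtain ⟨d, hd⟩ : ∃ d : ℤ, ∀ k : ℤ, q ^ k = c → k = d := by
      by_cases hex : ∃ d : ℤ, q ^ d = c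
      · obtain ⟨d, hd⟩ := hex
        exact ⟨d, fun k hk => hinj _ _ (hk.trans hd.symm)⟩
      · exact ⟨0, fun k hk => absurd ⟨k, hk⟩ hex⟩
    refine ⟨(hunit d).unit, fun a ha => ⟨(e a).coeff d, ?_⟩⟩
    apply e.injective
    rw [IsUnit.unit_spec, map_smul, AlgEquiv.apply_symm_apply]
    ext k
    have h1 := scale_apply_coeff hq h a k
    rw [ha, map_smul, AddMonoidAlgebra.coeff_smul, Finsupp.smul_apply, smul_eq_mul] at h1
    rw [AddMonoidAlgebra.coeff_smul, Finsupp.smul_apply, LaurentPolynomial.T_apply]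
    by_cases hk : d = k
    · subst hk; simp
    · have h2 : (e a).coeff k = 0 := by
        by_contra hne
        exact hk (hd k (mul_right_cancel₀ hne h1.symm)).symm
      simp [hk, h2]

theorem ShiftOrScale.good {α : A ≃ₐ[K] A} (h : ShiftOrScale α) : TwistGood α :=
  ⟨h.alg, h.locfin, h.eig⟩

/-- Nontrivial powers of `α` fix only the constants, being of the same type as `α`. -/
theorem ShiftOrScale.zpow_apply_ne {α : A ≃ₐ[K] A} (h : ShiftOrScale α) {u : A}
    (hu : u ∉ Set.range (algebraMap K A)) (n : ℤ) (hn : n ≠ 0) : (α ^ n) u ≠ u := by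
  intro hfix
  have := h.isDomain
  obtain ⟨w, hw⟩ := (h.zpow n hn).eig 1
  obtain ⟨k, hk⟩ := hw u (by rw [hfix, one_smul])
  obtain ⟨l, hl⟩ := hw 1 (by rw [map_one, one_smul])
  have hl0 : l ≠ 0 := by
    rintro rfl
    exact one_ne_zero (hl.trans (zero_smul K _))
  refine hu ⟨k * l⁻¹, ?_⟩
  rw [Algebra.algebraMap_eq_smul_one, hl, smul_smul, mul_assoc, inv_mul_cancel₀ hl0, mul_one, hk]

end Coefficients

/-! ### Ideals of `A[z]` -/

section PolynomialIdeals

open Polynomial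

variable {K A : Type*} [Field K] [CommRing A] [Algebra K A]

/-- The extension of `α ^ k` to `A[z]` which fixes `z`. -/
def sig (α : A ≃ₐ[K] A) (k : ℤ) : A[X] ≃+* A[X] :=
  Polynomial.mapEquiv ((α ^ k : A ≃ₐ[K] A) : A ≃+* A)

@[simp] theorem sig_coeff (α : A ≃ₐ[K] A) (k : ℤ) (f : A[X]) (n : ℕ) :
    (sig α k f).coeff n = (α ^ k) (f.coeff n) := by
  simp [sig]

@[simp] theorem sig_C (α : A ≃ₐ[K] A) (k : ℤ) (a : A) : sig α k (C a) = C ((α ^ k) a) := by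
  simp [sig]

@[simp] theorem sig_X (α : A ≃ₐ[K] A) (k : ℤ) : sig α k X = X := by
  simp [sig]

theorem sig_sig (α : A ≃ₐ[K] A) (k l : ℤ) (f : A[X]) :
    sig α k (sig α l f) = sig α (k + l) f := by
  ext n
  simp [zpow_add]

theorem sig_zero (α : A ≃ₐ[K] A) (f : A[X]) : sig α 0 f = f := by
  ext n
  simp

theorem sig_symm_apply (α : A ≃ₐ[K] A) (k : ℤ) (f : A[X]) :
    (sig α k).symm f = sig α (-k) f := by
  rw [RingEquiv.symm_apply_eq, sig_sig, add_neg_cancel, sig_zero]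

theorem sig_natDegree (α : A ≃ₐ[K] A) (k : ℤ) (f : A[X]) :
    (sig α k f).natDegree = f.natDegree := by
  rw [sig, mapEquiv_apply]
  exact natDegree_map_eq_of_injective (RingEquiv.injective _) f

/-- The multiplicative set generated by the elements `z + α^k(u)` of `A[z]` with `k ∈ s`. -/
def shiftProd (α : A ≃ₐ[K] A) (u : A) (s : Set ℤ) : Submonoid A[X] :=
  Submonoid.closure ((fun k : ℤ => X + C ((α ^ k) u)) '' s)

theorem mem_shiftProd (α : A ≃ₐ[K] A) (u : A) {s : Set ℤ} {k : ℤ} (hk : k ∈ s) :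
    X + C ((α ^ k) u) ∈ shiftProd α u s :=
  Submonoid.subset_closure ⟨k, hk, rfl⟩

theorem shiftProd_mono (α : A ≃ₐ[K] A) (u : A) {s t : Set ℤ} (h : s ⊆ t) :
    shiftProd α u s ≤ shiftProd α u t :=
  Submonoid.closure_mono (Set.image_mono h)

theorem shiftProd_monic {α : A ≃ₐ[K] A} {u : A} {s : Set ℤ} {f : A[X]}
    (hf : f ∈ shiftProd α u s) : f.Monic := by
  induction hf using Submonoid.closure_induction with
  | mem f hf => obtain ⟨k, -, rfl⟩ := hf; exact monic_X_add_C _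
  | one => exact monic_one
  | mul f g _ _ hf hg => exact hf.mul hg

theorem sig_mem_shiftProd {α : A ≃ₐ[K] A} {u : A} {s t : Set ℤ} {j : ℤ}
    (hst : ∀ k ∈ s, j + k ∈ t) {f : A[X]} (hf : f ∈ shiftProd α u s) :
    sig α j f ∈ shiftProd α u t := by
  induction hf using Submonoid.closure_induction with
  | mem f hf =>
    obtain ⟨k, hk, rfl⟩ := hf
    have := mem_shiftProd α u (hst k hk)
    simpa [zpow_add] using this
  | one => rw [map_one]; exact one_mem _
  | mul f g _ _ hf hg => rw [map_mul]; exact mul_mem hf hg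

/-- A predicate that behaves like membership in a prime ideal holds at some factor `z + α^k(u)`
as soon as it holds at a product of such factors. -/
theorem exists_of_mem_shiftProd {α : A ≃ₐ[K] A} {u : A} {s : Set ℤ} {p : A[X] → Prop}
    (h1 : ¬ p 1) (hmul : ∀ f g, p (f * g) → p f ∨ p g) {f : A[X]}
    (hf : f ∈ shiftProd α u s) (hpf : p f) : ∃ k ∈ s, p (X + C ((α ^ k) u)) := by
  induction hf using Submonoid.closure_induction with
  | mem f hf => obtain ⟨k, hk, rfl⟩ := hf; exact ⟨k, hk, hpf⟩
  | one => exact absurd hpf h1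
  | mul f g _ _ hf hg => exact (hmul f g hpf).elim hf hg

/-- Over an algebraically closed field, a stable subspace containing a nonzero vector killed by
some nonzero polynomial in the operator contains an eigenvector. -/
theorem exists_eigenvector [IsAlgClosed K] {V : Type*} [AddCommGroup V] [Module K V]
    (T : Module.End K V) (J : Submodule K V) (hJ : ∀ v ∈ J, T v ∈ J) (p : K[X]) (hp : p ≠ 0)
    (v : V) (hv : v ≠ 0) (hvJ : v ∈ J) (hpv : aeval T p v = 0) :
    ∃ (c : K) (w : V), w ≠ 0 ∧ w ∈ J ∧ T w = c • w := by
  induction hn : p.natDegree generalizing p v with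
  | zero =>
    rw [natDegree_eq_zero] at hn
    obtain ⟨c, rfl⟩ := hn
    have hc : c ≠ 0 := by simpa using hp
    rw [aeval_C, Module.algebraMap_end_apply] at hpv
    exact absurd hpv (smul_ne_zero hc hv)
  | succ n ih =>
    obtain ⟨c, hc⟩ := IsAlgClosed.exists_root p
      (by rw [degree_eq_natDegree hp, hn]; exact_mod_cast Nat.succ_ne_zero n)
    obtain ⟨r, rfl⟩ := dvd_iff_isRoot.mpr hc
    have hr : r ≠ 0 := right_ne_zero_of_mul hp
    by_cases h0 : T v - c • v = 0
    · exact ⟨c, v, hv, hvJ, sub_eq_zero.mp h0⟩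
    · refine ih r hr (T v - c • v) h0 (J.sub_mem (hJ v hvJ) (J.smul_mem c hvJ)) ?_ ?_
      · rw [mul_comm, map_mul, Module.End.mul_apply] at hpv
        simpa [Module.algebraMap_end_apply] using hpv
      · rw [natDegree_mul (X_sub_C_ne_zero c) hr, natDegree_X_sub_C] at hn
        omega

/-- The extension of `β` to `A[z]` as a `K`-linear operator. -/
def mapLin (β : A ≃ₐ[K] A) : Module.End K A[X] :=
  (Polynomial.mapAlgHom (β : A →ₐ[K] A)).toLinearMap

theorem mapLin_coeff (β : A ≃ₐ[K] A) (f : A[X]) (n : ℕ) :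
    (mapLin β f).coeff n = β (f.coeff n) := by
  simp [mapLin]

theorem aeval_mapLin_coeff (β : A ≃ₐ[K] A) (p : K[X]) (f : A[X]) (n : ℕ) :
    (aeval (mapLin β) p f).coeff n = aeval β.toLinearMap p (f.coeff n) := by
  induction p using Polynomial.induction_on' with
  | add p q hp hq => simp [hp, hq]
  | monomial k c =>
    have : ∀ (k : ℕ) (f : A[X]),
        ((mapLin β ^ k) f).coeff n = (β.toLinearMap ^ k) (f.coeff n) := by
      intro k
      induction k with
      | zero => intro f; simp
      | succ k ih =>
        intro f
        rw [pow_succ, pow_succ, Module.End.mul_apply, Module.End.mul_apply, ih, mapLin_coeff]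
        rfl
    rw [aeval_monomial, aeval_monomial, Module.End.mul_apply, Module.End.mul_apply,
      Module.algebraMap_end_apply, Module.algebraMap_end_apply, coeff_smul, this]

/-- A prime ideal of `A[z]` containing all the forward translates of a nonzero element meets
`K[z]`: the elements with that property form a stable subspace, and its eigenvectors have the
form `w p(z)` with `w` a unit of `A` and `p` a polynomial over `K`. -/
theorem exists_map_mem_of_forall_translate [IsAlgClosed K] {β : A ≃ₐ[K] A} (hβ : TwistGood β)
    (Q : Ideal A[X]) (f : A[X]) (hf : f ≠ 0) (h : ∀ n : ℕ, (mapLin β ^ n) f ∈ Q) :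
    ∃ p : K[X], p ≠ 0 ∧ p.map (algebraMap K A) ∈ Q := by
  let J : Submodule K A[X] :=
    ⨅ n : ℕ, (Q.restrictScalars K).comap (mapLin β ^ n)
  have hJ : ∀ g, g ∈ J ↔ ∀ n : ℕ, (mapLin β ^ n) g ∈ Q := by
    intro g
    simp [J, Submodule.mem_iInf]
  choose P hP0 hP using hβ.locfin
  obtain ⟨c, g, hg0, hgJ, hg⟩ := exists_eigenvector (mapLin β) J (by
      intro v hv
      rw [hJ] at hv ⊢
      intro n
      have := hv (n + 1)
      rwa [pow_succ, Module.End.mul_apply] at this)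
    (∏ k ∈ f.support, P (f.coeff k)) (Finset.prod_ne_zero_iff.mpr fun k _ => hP0 _) f hf
    ((hJ f).mpr h) (by
      ext k
      rw [aeval_mapLin_coeff, coeff_zero]
      by_cases hk : k ∈ f.support
      · rw [← Finset.prod_erase_mul _ _ hk, map_mul, Module.End.mul_apply, hP, map_zero]
      · rw [notMem_support_iff.mp hk, map_zero])
  obtain ⟨w, hw⟩ := hβ.eig c
  have hcoef : ∀ k, ∃ l : K, g.coeff k = l • (w : A) := by
    intro k
    apply hw
    rw [← mapLin_coeff, hg, coeff_smul]
  choose l hl using hcoef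
  have hgw : C (((w⁻¹ : Aˣ) : A)) * g ∈ Q := by
    apply Q.mul_mem_left
    simpa using (hJ g).mp hgJ 0
  let p : K[X] := ∑ k ∈ g.support, monomial k (l k)
  have hp : p.map (algebraMap K A) = C (((w⁻¹ : Aˣ) : A)) * g := by
    ext k
    simp only [p, coeff_map, finsetSum_coeff, coeff_monomial, coeff_C_mul, Finset.sum_ite_eq']
    split_ifs with hk
    · rw [hl, mul_smul_comm, Units.inv_mul, Algebra.algebraMap_eq_smul_one]
    · rw [notMem_support_iff.mp hk, mul_zero, map_zero]
  refine ⟨p, ?_, hp ▸ hgw⟩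
  intro h0
  rw [h0, Polynomial.map_zero] at hp
  apply hg0
  have := congrArg (fun r => C (w : A) * r) hp
  simpa only [← mul_assoc, ← C_mul, Units.mul_inv, C_1, one_mul, mul_zero] using this.symm

theorem mapLin_pow_eq_sig (α : A ≃ₐ[K] A) (n : ℕ) (f : A[X]) :
    (mapLin α ^ n) f = sig α n f := by
  induction n generalizing f with
  | zero => simp [sig_zero]
  | succ n ih =>
    have : mapLin α f = sig α 1 f := by ext k; simp [mapLin_coeff]
    rw [pow_succ, Module.End.mul_apply, ih, this, sig_sig, Nat.cast_succ]

theorem mapLin_inv_pow_eq_sig (α : A ≃ₐ[K] A) (n : ℕ) (f : A[X]) :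
    (mapLin α⁻¹ ^ n) f = sig α (-n) f := by
  rw [mapLin_pow_eq_sig]
  ext k
  simp

/-- A nonzero ideal of `A[z]` that is stable, up to factors `z + α^k(u)`, under the positive and
under the negative powers of `α` meets `K[z]`. Otherwise it lies in a prime `Q` not meeting
`K[z]`, and `Q` contains one factor with `k ≥ 1` and one with `k ≤ 0`, or else all the translates
in one direction of the ideal. In the former case `Q` contains a nonzero element of `A`, modulo
which `z` is congruent to an algebraic element. -/
theorem exists_map_mem_of_twisted_stable [IsAlgClosed K] {α : A ≃ₐ[K] A} (h : ShiftOrScale α)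
    {u : A} (hu : u ∉ Set.range (algebraMap K A)) (I : Ideal A[X]) (hI : I ≠ ⊥)
    (hpos : ∀ n : ℕ, ∃ D ∈ shiftProd α u (Set.Ici 1), ∀ f ∈ I, sig α n f * D ∈ I)
    (hneg : ∀ n : ℕ, ∃ E ∈ shiftProd α u (Set.Iic 0), ∀ f ∈ I, sig α (-n) f * E ∈ I) :
    ∃ p : K[X], p ≠ 0 ∧ p.map (algebraMap K A) ∈ I := by
  by_contra! hcon
  obtain ⟨Q, hQ, hIQ, hdisj⟩ := Ideal.exists_le_prime_disjoint I
    ((nonZeroDivisors K[X]).map (Polynomial.mapRingHom (algebraMap K A)))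
    (by
      rw [Set.disjoint_left]
      rintro _ hI ⟨p, hp, rfl⟩
      exact hcon p (nonZeroDivisors.ne_zero hp) hI)
  have hQK : ∀ p : K[X], p ≠ 0 → p.map (algebraMap K A) ∉ Q := by
    intro p hp hpQ
    exact Set.disjoint_left.mp hdisj hpQ ⟨p, mem_nonZeroDivisors_of_ne_zero hp, rfl⟩
  obtain ⟨f, hfI, hf0⟩ := Submodule.exists_mem_ne_zero_of_ne_bot hI
  have hprime : ∀ {s : Set ℤ} {D : A[X]}, D ∈ shiftProd α u s → D ∈ Q →
      ∃ k ∈ s, X + C ((α ^ k) u) ∈ Q := fun hD hDQ =>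
    exists_of_mem_shiftProd (p := fun f => f ∈ Q)
      ((Ideal.ne_top_iff_one Q).mp hQ.ne_top) (fun f g => hQ.mem_or_mem) hD hDQ
  by_cases h1 : ∃ k ∈ Set.Ici (1 : ℤ), X + C ((α ^ k) u) ∈ Q
  · by_cases h2 : ∃ k ∈ Set.Iic (0 : ℤ), X + C ((α ^ k) u) ∈ Q
    · obtain ⟨k, hk, hkQ⟩ := h1
      obtain ⟨l, hl, hlQ⟩ := h2
      have hkl : (α ^ k) u - (α ^ l) u ≠ 0 := by
        rw [sub_ne_zero]
        intro heq
        apply h.zpow_apply_ne hu (k - l) (by simp only [Set.mem_Ici, Set.mem_Iic] at hk hl; omega)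
        apply (α ^ l).injective
        rw [← AlgEquiv.mul_apply, ← zpow_add]
        simpa using heq
      obtain ⟨p, hp, hdvd⟩ := h.alg _ hkl (-(α ^ k) u)
      have hC : C ((α ^ k) u - (α ^ l) u) ∈ Q := by
        have := Q.sub_mem hkQ hlQ
        rwa [add_sub_add_left_eq_sub, ← C_sub] at this
      have h3 : C (aeval (-(α ^ k) u) p) ∈ Q := Q.mem_of_dvd (map_dvd C hdvd) hC
      have h4 : p.map (algebraMap K A) - C (aeval (-(α ^ k) u) p) ∈ Q := by
        refine Q.mem_of_dvd ?_ hkQ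
        have := X_sub_C_dvd_sub_C_eval (a := -(α ^ k) u) (p := p.map (algebraMap K A))
        rwa [eval_map_algebraMap, C_neg, sub_neg_eq_add] at this
      exact hQK p hp (by simpa using Q.add_mem h4 h3)
    · obtain ⟨p, hp, hpQ⟩ := exists_map_mem_of_forall_translate h.symm.good Q f hf0 (by
        intro n
        obtain ⟨E, hE, hEI⟩ := hneg n
        rw [mapLin_inv_pow_eq_sig]
        exact (hQ.mem_or_mem (hIQ (hEI f hfI))).resolve_right fun hEQ => h2 (hprime hE hEQ))
      exact hQK p hp hpQ
  · obtain ⟨p, hp, hpQ⟩ := exists_map_mem_of_forall_translate h.good Q f hf0 (by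
      intro n
      obtain ⟨D, hD, hDI⟩ := hpos n
      rw [mapLin_pow_eq_sig]
      exact (hQ.mem_or_mem (hIQ (hDI f hfI))).resolve_right fun hDQ => h1 (hprime hD hDQ))
    exact hQK p hp hpQ

end PolynomialIdeals

/-! ### The generalized Weyl algebra structure over `A[z]` -/

section Weyl

open Polynomial

variable {K A R : Type*} [Field K] [CommRing A] [Algebra K A] [Ring R]

@[simp] theorem gwaMon_natCast {W : Type*} [Monoid W] (X Y : W) (n : ℕ) :
    gwaMon X Y (n : ℤ) = Y ^ n := by
  simp [gwaMon]

@[simp] theorem gwaMon_neg_natCast {W : Type*} [Monoid W] (X Y : W) (n : ℕ) :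
    gwaMon X Y (-(n : ℤ)) = X ^ n := by
  rcases Nat.eq_zero_or_pos n with rfl | hn
  · simp [gwaMon]
  · simp [gwaMon, hn.ne']

/-- The defining relations of the generalized Weyl algebra `W(A[z], α, z + u)`, where `α` fixes
`z`, for a homomorphism `φ : A[z] → R`. Freeness is not part of this structure. -/
structure WeylRel (α : A ≃ₐ[K] A) (u : A) (φ : A[X] →+* R) (x y : R) : Prop where
  xy : x * y = φ (X + C u)
  yx : y * x = φ (X + C (α u))
  yb : ∀ b, y * φ b = φ (sig α 1 b) * y
  xb : ∀ b, x * φ b = φ (sig α (-1) b) * x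

namespace WeylRel

variable {α : A ≃ₐ[K] A} {u : A} {φ : A[X] →+* R} {x y : R}

theorem y_pow (h : WeylRel α u φ x y) (n : ℕ) (b : A[X]) :
    y ^ n * φ b = φ (sig α n b) * y ^ n := by
  induction n generalizing b with
  | zero => simp [sig_zero]
  | succ n ih =>
    rw [pow_succ, mul_assoc, h.yb, ← mul_assoc, ih, mul_assoc, sig_sig, Nat.cast_succ]

theorem x_pow (h : WeylRel α u φ x y) (n : ℕ) (b : A[X]) :
    x ^ n * φ b = φ (sig α (-n) b) * x ^ n := by
  induction n generalizing b with
  | zero => simp [sig_zero]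
  | succ n ih =>
    rw [pow_succ, mul_assoc, h.xb, ← mul_assoc, ih, mul_assoc, sig_sig, Nat.cast_succ, neg_add]

theorem mon_mul (h : WeylRel α u φ x y) (k : ℤ) (b : A[X]) :
    gwaMon x y k * φ b = φ (sig α k b) * gwaMon x y k := by
  obtain ⟨n, rfl | rfl⟩ := k.eq_nat_or_neg
  · simpa using h.y_pow n b
  · simpa using h.x_pow n b

theorem y_pow_x_pow [Nontrivial A] (h : WeylRel α u φ x y) (n : ℕ) :
    ∃ D ∈ shiftProd α u (Set.Ici 1), D.natDegree = n ∧ y ^ n * x ^ n = φ D := by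
  induction n with
  | zero => exact ⟨1, one_mem _, natDegree_one, by simp⟩
  | succ n ih =>
    obtain ⟨D, hD, hdeg, heq⟩ := ih
    have hlin : X + C (α u) ∈ shiftProd α u (Set.Ici 1) := by
      simpa using mem_shiftProd α u (s := Set.Ici 1) (k := 1) (Set.self_mem_Ici)
    have hsig : sig α 1 D ∈ shiftProd α u (Set.Ici 1) :=
      sig_mem_shiftProd (fun k hk => by simp only [Set.mem_Ici] at hk ⊢; omega) hD
    refine ⟨sig α 1 D * (X + C (α u)), mul_mem hsig hlin, ?_, ?_⟩
    · rw [(shiftProd_monic hsig).natDegree_mul (monic_X_add_C _), sig_natDegree, hdeg,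
        natDegree_X_add_C]
    · rw [pow_succ', pow_succ, mul_assoc, ← mul_assoc (y ^ n), heq, ← mul_assoc, h.yb, mul_assoc,
        h.yx, map_mul]

theorem x_pow_y_pow (h : WeylRel α u φ x y) (n : ℕ) :
    ∃ E ∈ shiftProd α u (Set.Iic 0), x ^ n * y ^ n = φ E := by
  induction n with
  | zero => exact ⟨1, one_mem _, by simp⟩
  | succ n ih =>
    obtain ⟨E, hE, heq⟩ := ih
    have hlin : X + C u ∈ shiftProd α u (Set.Iic 0) := by
      simpa using mem_shiftProd α u (s := Set.Iic 0) (k := 0) (Set.self_mem_Iic)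
    have hsig : sig α (-1) E ∈ shiftProd α u (Set.Iic 0) :=
      sig_mem_shiftProd (fun k hk => by simp only [Set.mem_Iic] at hk ⊢; omega) hE
    refine ⟨sig α (-1) E * (X + C u), mul_mem hsig hlin, ?_⟩
    rw [pow_succ', pow_succ, mul_assoc, ← mul_assoc (x ^ n), heq, ← mul_assoc, h.xb, mul_assoc,
        h.xy, map_mul]

theorem mon_mul_mon_neg [Nontrivial A] (h : WeylRel α u φ x y) (k : ℤ) :
    ∃ D ∈ shiftProd α u Set.univ, gwaMon x y k * gwaMon x y (-k) = φ D := by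
  obtain ⟨n, rfl | rfl⟩ := k.eq_nat_or_neg
  · obtain ⟨D, hD, -, heq⟩ := h.y_pow_x_pow n
    exact ⟨D, shiftProd_mono α u (Set.subset_univ _) hD, by simpa using heq⟩
  · obtain ⟨D, hD, heq⟩ := h.x_pow_y_pow n
    exact ⟨D, shiftProd_mono α u (Set.subset_univ _) hD, by simpa using heq⟩

/-- The basis element `yⁱxʲ` over `A` is a monic polynomial of degree `min i j` in `z` times the
monomial of degree `i - j`. -/
theorem y_pow_mul_x_pow [Nontrivial A] (h : WeylRel α u φ x y) (i j : ℕ) :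
    ∃ M : A[X], M.Monic ∧ M.natDegree = min i j ∧
      y ^ i * x ^ j = φ M * gwaMon x y ((i : ℤ) - j) := by
  rcases le_total i j with hij | hij
  · obtain ⟨k, rfl⟩ := Nat.exists_eq_add_of_le hij
    obtain ⟨D, hD, hdeg, heq⟩ := h.y_pow_x_pow i
    refine ⟨D, shiftProd_monic hD, by simpa using hdeg, ?_⟩
    rw [pow_add, ← mul_assoc, heq]
    simp
  · obtain ⟨k, rfl⟩ := Nat.exists_eq_add_of_le hij
    obtain ⟨D, hD, hdeg, heq⟩ := h.y_pow_x_pow j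
    refine ⟨sig α k D, shiftProd_monic (α := α) (u := u) (s := Set.univ) ?_, by simpa [sig_natDegree] using hdeg, ?_⟩
    · exact sig_mem_shiftProd (fun _ _ => Set.mem_univ _) hD
    · rw [add_comm j k, pow_add, mul_assoc, heq, h.y_pow]
      simp

end WeylRel

/-- The sum `∑ φ(fᵢ) vᵢ` over the monomials `vᵢ`. -/
def weylSum (φ : A[X] →+* R) (x y : R) : (ℤ →₀ A[X]) →+ R :=
  Finsupp.liftAddHom fun i => (AddMonoidHom.mulRight (gwaMon x y i)).comp (φ : A[X] →+ R)

@[simp] theorem weylSum_single (φ : A[X] →+* R) (x y : R) (i : ℤ) (b : A[X]) :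
    weylSum φ x y (Finsupp.single i b) = φ b * gwaMon x y i := by
  simp [weylSum]

theorem weylSum_eq_sum (φ : A[X] →+* R) (x y : R) (f : ℤ →₀ A[X]) {s : Finset ℤ}
    (hs : f.support ⊆ s) : weylSum φ x y f = ∑ i ∈ s, φ (f i) * gwaMon x y i := by
  rw [weylSum, Finsupp.liftAddHom_apply, Finsupp.sum_of_support_subset f hs _ (by simp)]
  rfl

/-- Freeness over `A` on the elements `yⁱxʲ` gives freeness over `A[z]` on the monomials: in each
degree the change of basis is given by monic polynomials in `z`, one of each degree. -/
theorem weylSum_bijective [Nontrivial A] [Algebra K R] {α : A ≃ₐ[K] A} {u : A} {ι : A →ₐ[K] R}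
    {x y : R} (hR : IsAmbiskew α u ι x y) {φ : A[X] →+* R} (hφ : ∀ a, φ (C a) = ι a)
    (h : WeylRel α u φ x y) : Function.Bijective (weylSum φ x y) := by
  choose M hM hdeg hMeq using h.y_pow_mul_x_pow
  let Θ : (ℕ × ℕ →₀ A) →+ (ℤ →₀ A[X]) := Finsupp.liftAddHom fun p =>
    (Finsupp.singleAddHom ((p.1 : ℤ) - p.2)).comp
      ((AddMonoidHom.mulRight (M p.1 p.2)).comp ((C : A →+* A[X]) : A →+ A[X]))
  have hΘ : ∀ p a, Θ (Finsupp.single p a) =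
      Finsupp.single ((p.1 : ℤ) - p.2) (C a * M p.1 p.2) := by
    intro p a
    simp [Θ]
  have hcomp : ∀ f, weylSum φ x y (Θ f) = f.sum fun p a => ι a * (y ^ p.1 * x ^ p.2) := by
    intro f
    induction f using Finsupp.induction_linear with
    | zero => simp
    | add f g hf hg =>
      rw [map_add, map_add, hf, hg, Finsupp.sum_add_index'] <;> intros <;> simp [add_mul]
    | single p a =>
      rw [hΘ, weylSum_single, Finsupp.sum_single_index (by simp), hMeq, map_mul, hφ, mul_assoc]
  have hsingle : ∀ (n : ℕ) (m : ℤ) (b : A[X]), b.degree < n →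
      Finsupp.single m b ∈ AddMonoidHom.range Θ := by
    intro n
    induction n with
    | zero =>
      intro m b hb
      have : b = 0 := by
        rw [← degree_eq_bot]
        simpa [Nat.WithBot.lt_zero_iff] using hb
      rw [this, Finsupp.single_zero]
      exact zero_mem _
    | succ n ih =>
      intro m b hb
      -- the exponents of the basis element of degree `m` whose coefficient has `z`-degree `n`
      obtain ⟨i, j, hm, hn⟩ : ∃ i j : ℕ, (i : ℤ) - j = m ∧ min i j = n :=
        ⟨n + m.toNat, n + (-m).toNat, by omega, by omega⟩
      have h1 : (b - C (b.coeff n) * M i j).degree < n := by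
        rw [degree_lt_iff_coeff_zero] at hb ⊢
        intro k hk
        rw [coeff_sub, coeff_C_mul]
        rcases hk.eq_or_lt with rfl | hk
        · have := (hM i j).coeff_natDegree
          rw [hdeg, hn] at this
          rw [this, mul_one, sub_self]
        · have hMk : (M i j).coeff k = 0 :=
            coeff_eq_zero_of_natDegree_lt (by rw [hdeg, hn]; exact hk)
          rw [hb k hk, hMk, mul_zero, sub_zero]
      have h2 := add_mem (ih m _ h1)
        (show Θ (Finsupp.single (i, j) (b.coeff n)) ∈ AddMonoidHom.range Θ from ⟨_, rfl⟩)
      rw [hΘ] at h2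
      simp only at h2
      rwa [hm, ← Finsupp.single_add, sub_add_cancel] at h2
  have hsurj : Function.Surjective Θ := by
    intro f
    change f ∈ AddMonoidHom.range Θ
    induction f using Finsupp.induction_linear with
    | zero => exact zero_mem _
    | add f g hf hg => exact add_mem hf hg
    | single m b =>
      exact hsingle (b.natDegree + 1) m b
        (degree_le_natDegree.trans_lt (by exact_mod_cast Nat.lt_succ_self _))
  constructor
  · rw [injective_iff_map_eq_zero]
    intro f hf
    obtain ⟨g, rfl⟩ := hsurj f
    rw [hcomp] at hf
    have : g = 0 := hR.free.1 (hf.trans (by simp))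
    rw [this, map_zero]
  · intro r
    obtain ⟨g, hg⟩ := hR.free.2 r
    exact ⟨Θ g, (hcomp g).trans hg⟩

/-- The principal two-sided ideal `wR` of a central element `w`. -/
def centralIdeal (w : R) (hw : ∀ r, w * r = r * w) : TwoSidedIdeal R :=
  TwoSidedIdeal.mk' {r | ∃ s, r = w * s} ⟨0, by simp⟩
    (by rintro _ _ ⟨s, rfl⟩ ⟨t, rfl⟩; exact ⟨s + t, by rw [mul_add]⟩)
    (by rintro _ ⟨s, rfl⟩; exact ⟨-s, by simp⟩)
    (by rintro r _ ⟨s, rfl⟩; exact ⟨r * s, by rw [← mul_assoc, ← hw, mul_assoc]⟩)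
    (by rintro _ r ⟨s, rfl⟩; exact ⟨s * r, by rw [mul_assoc]⟩)

theorem mem_centralIdeal {w : R} {hw : ∀ r, w * r = r * w} {r : R} :
    r ∈ centralIdeal w hw ↔ ∃ s, r = w * s := by
  rw [centralIdeal, TwoSidedIdeal.mem_mk']
  rfl

section CentralPrime

variable {α : A ≃ₐ[K] A} {u : A} {φ : A[X] →+* R} {x y : R}

theorem weylSum_mem_centralIdeal (hb : Function.Bijective (weylSum φ x y)) {π : A[X]}
    {hw : ∀ r, φ π * r = r * φ π} (f : ℤ →₀ A[X]) :
    weylSum φ x y f ∈ centralIdeal (φ π) hw ↔ ∀ i, π ∣ f i := by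
  have hmul : ∀ g : ℤ →₀ A[X], φ π * weylSum φ x y g = weylSum φ x y (π • g) := by
    intro g
    rw [weylSum_eq_sum φ x y (π • g) Finsupp.support_smul, weylSum_eq_sum φ x y g subset_rfl,
      Finset.mul_sum]
    simp [mul_assoc]
  rw [mem_centralIdeal]
  constructor
  · rintro ⟨s, hs⟩ i
    obtain ⟨g, rfl⟩ := hb.2 s
    rw [hmul] at hs
    rw [hb.1 hs]
    exact ⟨g i, rfl⟩
  · intro h
    choose g hg using h
    refine ⟨∑ i ∈ f.support, φ (g i) * gwaMon x y i, ?_⟩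
    rw [weylSum_eq_sum φ x y f subset_rfl, Finset.mul_sum]
    refine Finset.sum_congr rfl fun i _ => ?_
    rw [hg i, map_mul, mul_assoc]

theorem map_mem_centralIdeal (hb : Function.Bijective (weylSum φ x y)) {π : A[X]}
    {hw : ∀ r, φ π * r = r * φ π} (b : A[X]) :
    φ b ∈ centralIdeal (φ π) hw ↔ π ∣ b := by
  have h0 : φ b = weylSum φ x y (Finsupp.single 0 b) := by simp [gwaMon]
  rw [h0, weylSum_mem_centralIdeal hb]
  constructor
  · intro h
    simpa using h 0
  · intro h i
    rw [Finsupp.single_apply]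
    split_ifs
    · exact h
    · exact dvd_zero _

/-- A two-sided ideal not contained in `πR` contains, modulo `πR`, an element of `A[z]` not
divisible by `π`. The operation `r ↦ α^j(u) r - r u` multiplies the component of degree `k` by
`α^j(u) - α^k(u)`, so it reduces the number of components not divisible by `π`; once a single
one is left, it is moved to degree zero. -/
theorem exists_map_mem_of_not_le [Nontrivial A] (h : WeylRel α u φ x y)
    (hb : Function.Bijective (weylSum φ x y))
    (hu : ∀ k l : ℤ, k ≠ l → (α ^ k) u ≠ (α ^ l) u) {π : A[X]}
    {hw : ∀ r, φ π * r = r * φ π} (hprime : ∀ f g, π ∣ f * g → π ∣ f ∨ π ∣ g)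
    (hA : ∀ a : A, a ≠ 0 → ¬ π ∣ C a) (hshift : ∀ k : ℤ, ¬ π ∣ X + C ((α ^ k) u))
    (I : TwoSidedIdeal R) (hI : ¬ I ≤ centralIdeal (φ π) hw) :
    ∃ b, ¬ π ∣ b ∧ ∃ r ∈ I, r - φ b ∈ centralIdeal (φ π) hw := by
  classical
  set P := centralIdeal (φ π) hw with hP
  suffices key : ∀ (n : ℕ) (f : ℤ →₀ A[X]), (f.support.filter fun i => ¬ π ∣ f i).card = n →
      weylSum φ x y f ∈ I → weylSum φ x y f ∉ P →
      ∃ b, ¬ π ∣ b ∧ ∃ r ∈ I, r - φ b ∈ P by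
    obtain ⟨r, hrI, hrP⟩ := Set.not_subset.mp hI
    obtain ⟨f, rfl⟩ := hb.2 r
    exact key _ f rfl hrI hrP
  intro n
  induction n using Nat.strong_induction_on with
  | _ n ih =>
  intro f hn hfI hfP
  have hmem : ∀ (f : ℤ →₀ A[X]) i, i ∈ (f.support.filter fun i => ¬ π ∣ f i) ↔ ¬ π ∣ f i := by
    intro f i
    rw [Finset.mem_filter, Finsupp.mem_support_iff, and_iff_right_iff_imp]
    intro h1 h2
    exact h1 (h2 ▸ dvd_zero π)
  obtain ⟨j, hj⟩ : ∃ j, ¬ π ∣ f j := by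
    rw [hP, weylSum_mem_centralIdeal hb] at hfP
    exact not_forall.mp hfP
  by_cases hone : ∃ i, i ≠ j ∧ ¬ π ∣ f i
  · obtain ⟨i, hij, hi⟩ := hone
    let g : ℤ →₀ A[X] := Finsupp.onFinset f.support
      (fun k => C ((α ^ j) u - (α ^ k) u) * f k) (by
        intro k hk
        rw [Finsupp.mem_support_iff]
        exact right_ne_zero_of_mul hk)
    have hg : ∀ k, g k = C ((α ^ j) u - (α ^ k) u) * f k := fun k => rfl
    have hsum : weylSum φ x y g =
        φ (C ((α ^ j) u)) * weylSum φ x y f - weylSum φ x y f * φ (C u) := by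
      rw [weylSum_eq_sum φ x y g Finsupp.support_onFinset_subset,
        weylSum_eq_sum φ x y f subset_rfl, Finset.mul_sum, Finset.sum_mul,
        ← Finset.sum_sub_distrib]
      refine Finset.sum_congr rfl fun k _ => ?_
      rw [hg, mul_assoc (φ (f k)), h.mon_mul, sig_C, ← mul_assoc, ← mul_assoc, ← map_mul,
        ← map_mul, ← sub_mul, ← map_sub, C_sub, sub_mul, mul_comm (f k)]
    have hgi : ¬ π ∣ g i := by
      intro hd
      rcases hprime _ _ (hg i ▸ hd) with hd | hd
      · exact hA _ (sub_ne_zero.mpr (hu j i hij.symm)) hd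
      · exact hi hd
    refine ih _ ?_ g rfl ?_ ?_
    · rw [← hn]
      apply Finset.card_lt_card
      rw [Finset.ssubset_iff_of_subset]
      · refine ⟨j, (hmem f j).mpr hj, fun hjg => (hmem g j).mp hjg ?_⟩
        rw [hg, sub_self, C_0, zero_mul]
        exact dvd_zero π
      · intro k hk
        rw [hmem] at hk ⊢
        exact fun hd => hk (hg k ▸ Dvd.dvd.mul_left hd _)
    · rw [hsum]
      exact I.sub_mem (I.mul_mem_left _ _ hfI) (I.mul_mem_right _ _ hfI)
    · rw [hP, weylSum_mem_centralIdeal hb]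
      exact fun hall => hgi (hall i)
  · push Not at hone
    obtain ⟨D, hD, hDeq⟩ := h.mon_mul_mon_neg j
    refine ⟨f j * D, ?_, weylSum φ x y f * gwaMon x y (-j), I.mul_mem_right _ _ hfI, ?_⟩
    · intro hd
      rcases hprime _ _ hd with hd | hd
      · exact hj hd
      · obtain ⟨k, -, hk⟩ := exists_of_mem_shiftProd (p := fun f => π ∣ f)
          (by simpa using hA 1 one_ne_zero) hprime hD hd
        exact hshift k hk
    · have hsplit : weylSum φ x y f =
          φ (f j) * gwaMon x y j + weylSum φ x y (f.erase j) := by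
        conv_lhs => rw [← Finsupp.single_add_erase j f]
        rw [map_add, weylSum_single]
      rw [hsplit, add_mul, mul_assoc, hDeq, ← map_mul, add_sub_cancel_left]
      apply P.mul_mem_right
      rw [hP, weylSum_mem_centralIdeal hb]
      intro k
      by_cases hk : k = j
      · rw [hk, Finsupp.erase_same]; exact dvd_zero π
      · rw [Finsupp.erase_ne hk]; exact hone k hk

theorem isPrime_centralIdeal [Nontrivial A] (h : WeylRel α u φ x y)
    (hb : Function.Bijective (weylSum φ x y))
    (hu : ∀ k l : ℤ, k ≠ l → (α ^ k) u ≠ (α ^ l) u) {π : A[X]}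
    {hw : ∀ r, φ π * r = r * φ π} (hprime : ∀ f g, π ∣ f * g → π ∣ f ∨ π ∣ g)
    (hA : ∀ a : A, a ≠ 0 → ¬ π ∣ C a) (hshift : ∀ k : ℤ, ¬ π ∣ X + C ((α ^ k) u)) :
    IsPrimeTwoSided (centralIdeal (φ π) hw) := by
  set P := centralIdeal (φ π) hw with hP
  refine ⟨fun htop => ?_, fun I J hIJ => ?_⟩
  · have h1 : φ 1 ∈ P := by rw [htop]; trivial
    rw [hP, map_mem_centralIdeal hb] at h1
    exact hA 1 one_ne_zero (by simpa using h1)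
  · by_contra! hcon
    obtain ⟨b, hbπ, r, hr, hrb⟩ := exists_map_mem_of_not_le h hb hu hprime hA hshift I hcon.1
    obtain ⟨c, hcπ, s, hs, hsc⟩ := exists_map_mem_of_not_le h hb hu hprime hA hshift J hcon.2
    have h1 : φ (b * c) ∈ P := by
      have : φ (b * c) = r * s - ((r - φ b) * s + φ b * (s - φ c)) := by
        rw [map_mul]; noncomm_ring
      rw [this]
      exact P.sub_mem (hIJ r hr s hs)
        (P.add_mem (P.mul_mem_right _ _ hrb) (P.mul_mem_left _ _ hsc))
    rw [hP, map_mem_centralIdeal hb] at h1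
    exact (hprime b c h1).elim hbπ hcπ

/-- Every nonzero two-sided ideal meets the image of `K[z]`. -/
theorem exists_map_mem_of_ne_bot_s3 [IsAlgClosed K] (h : WeylRel α u φ x y)
    (hb : Function.Bijective (weylSum φ x y)) (hα : ShiftOrScale α)
    (hu : u ∉ Set.range (algebraMap K A))
    (hu' : ∀ k l : ℤ, k ≠ l → (α ^ k) u ≠ (α ^ l) u) (T : TwoSidedIdeal R) (hT : T ≠ ⊥) :
    ∃ p : K[X], p ≠ 0 ∧ φ (p.map (algebraMap K A)) ∈ T := by
  have := hα.isDomain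
  have hw : ∀ r, φ 0 * r = r * φ 0 := by simp
  have hbot : centralIdeal (φ 0) hw = ⊥ := by
    ext r
    rw [mem_centralIdeal, TwoSidedIdeal.mem_bot]
    simp
  obtain ⟨b, hb0, r, hr, hrb⟩ := exists_map_mem_of_not_le (π := 0) (hw := hw) h hb hu'
    (fun f g => by simp) (fun a ha => by simpa using ha)
    (fun k => by rw [zero_dvd_iff]; exact X_add_C_ne_zero _) T (by rwa [hbot, le_bot_iff])
  rw [hbot, TwoSidedIdeal.mem_bot, sub_eq_zero] at hrb
  let I : Ideal A[X] :=
    { carrier := {f | φ f ∈ T}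
      zero_mem' := by simp [T.zero_mem]
      add_mem' := fun {f g} hf hg => by
        simpa using T.add_mem hf hg
      smul_mem' := fun c f hf => by
        simpa using T.mul_mem_left (φ c) _ hf }
  have hI : ∀ f, f ∈ I ↔ φ f ∈ T := fun f => Iff.rfl
  refine exists_map_mem_of_twisted_stable hα hu I ?_ ?_ ?_
  · rw [Submodule.ne_bot_iff]
    exact ⟨b, (hI b).mpr (hrb ▸ hr), fun h0 => hb0 (by rw [h0])⟩
  · intro n
    obtain ⟨D, hD, -, heq⟩ := h.y_pow_x_pow n
    refine ⟨D, hD, fun f hf => ?_⟩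
    rw [hI, map_mul, ← heq, ← mul_assoc, ← h.y_pow]
    exact T.mul_mem_right _ _ (T.mul_mem_left _ _ hf)
  · intro n
    obtain ⟨E, hE, heq⟩ := h.x_pow_y_pow n
    refine ⟨E, hE, fun f hf => ?_⟩
    rw [hI, map_mul, ← heq, ← mul_assoc, ← h.x_pow]
    exact T.mul_mem_right _ _ (T.mul_mem_left _ _ hf)

end CentralPrime

end Weyl

/-! ### Central elements of prime ideals -/

section PrimeIdeals

open Polynomial

theorem IsPrimeTwoSided.mem_or_mem_of_central {R : Type*} [Ring R] {P : TwoSidedIdeal R}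
    (hP : IsPrimeTwoSided P) {r s : R} (hr : ∀ t, r * t = t * r) (h : r * s ∈ P) :
    r ∈ P ∨ s ∈ P := by
  -- the annihilator `J` of `r` modulo `P`, and the left annihilator of `J` modulo `P`
  let J : TwoSidedIdeal R := TwoSidedIdeal.mk' {b | r * b ∈ P} (by simp [P.zero_mem])
    (by intro a b ha hb; simpa [mul_add] using P.add_mem ha hb)
    (by intro a ha; simpa using P.neg_mem ha)
    (by
      intro a b hb
      have := P.mul_mem_left a _ hb
      rwa [← mul_assoc, ← hr, mul_assoc] at this)
    (by
      intro a b ha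
      have := P.mul_mem_right _ b ha
      rwa [mul_assoc] at this)
  have hJ : ∀ b, b ∈ J ↔ r * b ∈ P := fun b => by
    simp only [J, TwoSidedIdeal.mem_mk']
    rfl
  let I : TwoSidedIdeal R := TwoSidedIdeal.mk' {a | ∀ b ∈ J, a * b ∈ P} (by simp [P.zero_mem])
    (by intro a b ha hb c hc; simpa [add_mul] using P.add_mem (ha c hc) (hb c hc))
    (by intro a ha c hc; simpa using P.neg_mem (ha c hc))
    (by intro a b hb c hc; rw [mul_assoc]; exact P.mul_mem_left _ _ (hb c hc))
    (by intro a b ha c hc; rw [mul_assoc]; exact ha _ (J.mul_mem_left _ _ hc))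
  have hI : ∀ a, a ∈ I ↔ ∀ b ∈ J, a * b ∈ P := fun a => by
    simp only [I, TwoSidedIdeal.mem_mk']
    rfl
  rcases hP.2 I J (fun a ha b hb => (hI a).mp ha b hb) with hle | hle
  · exact Or.inl (hle ((hI r).mpr fun b hb => (hJ b).mp hb))
  · exact Or.inr (hle ((hJ s).mpr h))

theorem IsPrimeTwoSided.exists_sub_mem {K R : Type*} [Field K] [IsAlgClosed K] [Ring R]
    [Algebra K R] {P : TwoSidedIdeal R} (hP : IsPrimeTwoSided P) {z : R}
    (hz : ∀ t, z * t = t * z) (p : K[X]) (hp : p ≠ 0) (h : aeval z p ∈ P) :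
    ∃ c : K, z - algebraMap K R c ∈ P := by
  induction hn : p.natDegree generalizing p with
  | zero =>
    rw [natDegree_eq_zero] at hn
    obtain ⟨c, rfl⟩ := hn
    have hc : c ≠ 0 := by simpa using hp
    refine absurd ?_ hP.1
    rw [← TwoSidedIdeal.one_mem_iff]
    have := P.mul_mem_left (algebraMap K R c⁻¹) _ h
    rwa [aeval_C, ← map_mul, inv_mul_cancel₀ hc, map_one] at this
  | succ n ih =>
    obtain ⟨c, hc⟩ := IsAlgClosed.exists_root p
      (by rw [degree_eq_natDegree hp, hn]; exact_mod_cast Nat.succ_ne_zero n)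
    obtain ⟨r, rfl⟩ := dvd_iff_isRoot.mpr hc
    have hr : r ≠ 0 := right_ne_zero_of_mul hp
    rw [map_mul, map_sub, aeval_X, aeval_C] at h
    rcases hP.mem_or_mem_of_central (fun t => by
      rw [sub_mul, mul_sub, hz, Algebra.commutes]) h with h | h
    · exact ⟨c, h⟩
    · refine ih r hr h ?_
      rw [natDegree_mul (X_sub_C_ne_zero c) hr, natDegree_X_sub_C] at hn
      omega

end PrimeIdeals

/-! ### The Casimir element -/

section Casimir

open Polynomial

variable {K A R : Type*} [Field K] [CommRing A] [Algebra K A] [Ring R] [Algebra K R]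
  {α : A ≃ₐ[K] A} {u : A} {ι : A →ₐ[K] R} {x y : R}

theorem IsAmbiskew.casimir_commute_coeff (hR : IsAmbiskew α u ι x y) (a : A) :
    Commute (ι a) (x * y - ι u) := by
  have h1 : x * y * ι a = ι a * (x * y) := by
    rw [mul_assoc, hR.ya, ← mul_assoc, hR.xa, AlgEquiv.symm_apply_apply, mul_assoc]
  rw [Commute, SemiconjBy, mul_sub, sub_mul, h1, ← map_mul, ← map_mul, mul_comm a u]

theorem IsAmbiskew.yx_eq (hR : IsAmbiskew α u ι x y) :
    y * x = (x * y - ι u) + ι (α u) := by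
  rw [hR.xy, map_sub]; abel

theorem IsAmbiskew.casimir_mul_y (hR : IsAmbiskew α u ι x y) :
    (x * y - ι u) * y = y * (x * y - ι u) := by
  rw [mul_sub, ← mul_assoc, hR.yx_eq, hR.ya, add_mul, add_sub_cancel_right]

theorem IsAmbiskew.casimir_mul_x (hR : IsAmbiskew α u ι x y) :
    (x * y - ι u) * x = x * (x * y - ι u) := by
  rw [sub_mul, mul_assoc, hR.yx_eq, mul_add, hR.xa, AlgEquiv.symm_apply_apply,
    add_sub_cancel_right]

theorem IsAmbiskew.casimir_central (hR : IsAmbiskew α u ι x y) (r : R) :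
    (x * y - ι u) * r = r * (x * y - ι u) := by
  obtain ⟨f, rfl⟩ := hR.free.2 r
  have hx : Commute (x * y - ι u) x := hR.casimir_mul_x
  have hy : Commute (x * y - ι u) y := hR.casimir_mul_y
  have : Commute (x * y - ι u) (f.sum fun p a => ι a * (y ^ p.1 * x ^ p.2)) :=
    Commute.sum_right _ _ _ fun p _ =>
      ((hR.casimir_commute_coeff _).symm).mul_right ((hy.pow_right _).mul_right (hx.pow_right _))
  exact this

/-- The homomorphism `A[z] → R` that extends `ι` and sends `z` to the Casimir element. -/
def IsAmbiskew.polyHom (hR : IsAmbiskew α u ι x y) : A[X] →+* R :=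
  Polynomial.eval₂RingHom' (ι : A →+* R) (x * y - ι u) hR.casimir_commute_coeff

theorem IsAmbiskew.polyHom_C (hR : IsAmbiskew α u ι x y) (a : A) : hR.polyHom (C a) = ι a := by
  simp [IsAmbiskew.polyHom, eval₂RingHom']

theorem IsAmbiskew.polyHom_X (hR : IsAmbiskew α u ι x y) : hR.polyHom X = x * y - ι u := by
  simp [IsAmbiskew.polyHom, eval₂RingHom']

theorem IsAmbiskew.polyHom_map (hR : IsAmbiskew α u ι x y) (p : K[X]) :
    hR.polyHom (p.map (algebraMap K A)) = aeval (x * y - ι u) p := by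
  induction p using Polynomial.induction_on' with
  | add p q hp hq => rw [Polynomial.map_add, map_add, hp, hq, map_add]
  | monomial n c =>
    rw [← C_mul_X_pow_eq_monomial, Polynomial.map_mul, Polynomial.map_pow, map_C, map_X, map_mul,
      map_pow, hR.polyHom_C, hR.polyHom_X, AlgHom.commutes, map_mul, map_pow, aeval_C, aeval_X]

theorem IsAmbiskew.weylRel (hR : IsAmbiskew α u ι x y) : WeylRel α u hR.polyHom x y where
  xy := by rw [map_add, hR.polyHom_C, hR.polyHom_X, sub_add_cancel]
  yx := by rw [map_add, hR.polyHom_C, hR.polyHom_X, hR.yx_eq]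
  yb b := by
    induction b using Polynomial.induction_on' with
    | add p q hp hq => simp only [map_add, mul_add, add_mul, hp, hq]
    | monomial n a =>
      have hc : Commute (x * y - ι u) y := hR.casimir_mul_y
      rw [← C_mul_X_pow_eq_monomial]
      simp only [map_mul, map_pow, sig_C, sig_X, hR.polyHom_C, hR.polyHom_X, zpow_one]
      rw [← mul_assoc, hR.ya, mul_assoc, ← (hc.pow_left n).eq, mul_assoc]
  xb b := by
    induction b using Polynomial.induction_on' with
    | add p q hp hq => simp only [map_add, mul_add, add_mul, hp, hq]
    | monomial n a =>
      have hc : Commute (x * y - ι u) x := hR.casimir_mul_x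
      rw [← C_mul_X_pow_eq_monomial]
      simp only [map_mul, map_pow, sig_C, sig_X, hR.polyHom_C, hR.polyHom_X, zpow_neg_one]
      rw [← mul_assoc, hR.xa, mul_assoc, ← (hc.pow_left n).eq, mul_assoc]
      rfl

end Casimir

/-- Corollary 2.5: for `A = K[t]` with `α(t) = t + μ` (char 0) or `A = K[t^{±1}]` with
`α(t) = qt` (`q` not a root of unity), and `u ∈ A \ K`, the height one prime two-sided
ideals of `R = R(A, α, u − α(u), 1)` are exactly the `(z − λ)R`, and every nonzero
two-sided ideal of `R` meets `K[z]` nontrivially. -/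
theorem stmt3 {K A R : Type*} [Field K] [IsAlgClosed K]
    [CommRing A] [Algebra K A] [Ring R] [Algebra K R]
    (α : A ≃ₐ[K] A)
    -- case (i): `A ≅ K[t]`, `char K = 0`, `α(t) = t + μ`, `μ ≠ 0`;
    -- case (ii): `A ≅ K[t^{±1}]`, `α(t) = q·t`, `q ≠ 0` not a root of unity
    (hcase :
      (CharZero K ∧ ∃ (e : A ≃ₐ[K] Polynomial K) (μ : K), μ ≠ 0 ∧
        e (α (e.symm Polynomial.X)) = Polynomial.X + Polynomial.C μ)
      ∨ (∃ (e : A ≃ₐ[K] LaurentPolynomial K) (q : K), q ≠ 0 ∧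
        (∀ n : ℕ, 0 < n → q ^ n ≠ 1) ∧
        e (α (e.symm (LaurentPolynomial.T 1))) = q • LaurentPolynomial.T 1))
    (u : A) (hu : u ∉ Set.range (algebraMap K A))
    (ι : A →ₐ[K] R) (x y : R) (hR : IsAmbiskew α u ι x y)
    -- the Casimir element `z = xy − u`
    (z : R) (hz : z = x * y - ι u) :
    -- the `(z − λ)R` are exactly the height one prime two-sided ideals
    ((∀ lam : K, ∃ P : TwoSidedIdeal R,
      (P : Set R) = {r : R | ∃ s : R, r = (z - algebraMap K R lam) * s} ∧
      IsPrimeTwoSided P ∧ P ≠ ⊥ ∧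
      (∀ Q : TwoSidedIdeal R, IsPrimeTwoSided Q → Q < P → Q = ⊥)) ∧
    (∀ P : TwoSidedIdeal R, IsPrimeTwoSided P → P ≠ ⊥ →
      (∀ Q : TwoSidedIdeal R, IsPrimeTwoSided Q → Q < P → Q = ⊥) →
      ∃ lam : K, (P : Set R) = {r : R | ∃ s : R, r = (z - algebraMap K R lam) * s})) ∧
    -- every nonzero two-sided ideal of `R` has nonzero intersection with `K[z]`
    (∀ T : TwoSidedIdeal R, T ≠ ⊥ →
      ∃ r : R, r ∈ T ∧ r ≠ 0 ∧ ∃ p : Polynomial K, r = Polynomial.aeval z p) := by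
  have hα : ShiftOrScale α := hcase
  have hdom := hα.isDomain
  have hu' : ∀ k l : ℤ, k ≠ l → (α ^ k) u ≠ (α ^ l) u := by
    intro k l hkl heq
    apply hα.zpow_apply_ne hu (k - l) (sub_ne_zero.mpr hkl)
    apply (α ^ l).injective
    rw [← AlgEquiv.mul_apply, ← zpow_add]
    simpa using heq
  have hW := hR.weylRel
  have hb := weylSum_bijective hR hR.polyHom_C hW
  have hzc : ∀ r, z * r = r * z := by
    rw [hz]; exact hR.casimir_central
  have hmeet : ∀ T : TwoSidedIdeal R, T ≠ ⊥ →
      ∃ p : Polynomial K, p ≠ 0 ∧ Polynomial.aeval z p ∈ T := by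
    intro T hT
    obtain ⟨p, hp, hpT⟩ := exists_map_mem_of_ne_bot_s3 hW hb hα hu hu' T hT
    rw [hR.polyHom_map, ← hz] at hpT
    exact ⟨p, hp, hpT⟩
  have hinj : ∀ b, hR.polyHom b = 0 → b = 0 := by
    intro b hb0
    have h1 : weylSum hR.polyHom x y (Finsupp.single 0 b) = 0 := by simp [gwaMon, hb0]
    exact Finsupp.single_eq_zero.mp (hb.1 (h1.trans (map_zero _).symm))
  -- `z - lam` as the image of a polynomial with coefficients in `A`
  have hφ : ∀ lam : K, hR.polyHom (Polynomial.X - Polynomial.C (algebraMap K A lam)) =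
      z - algebraMap K R lam := by
    intro lam
    rw [map_sub, hR.polyHom_X, hR.polyHom_C, AlgHom.commutes, hz]
  have hcent : ∀ (lam : K) (r : R), hR.polyHom (Polynomial.X - Polynomial.C (algebraMap K A lam)) * r
      = r * hR.polyHom (Polynomial.X - Polynomial.C (algebraMap K A lam)) := by
    intro lam r
    rw [hφ, sub_mul, mul_sub, hzc, Algebra.commutes]
  have hprimePoly : ∀ lam : K, Prime (Polynomial.X - Polynomial.C (algebraMap K A lam)) :=
    fun lam => Polynomial.prime_X_sub_C _
  have hPprime : ∀ lam : K, IsPrimeTwoSided (centralIdeal _ (hcent lam)) := by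
    intro lam
    refine isPrime_centralIdeal hW hb hu' (fun f g => (hprimePoly lam).dvd_or_dvd) ?_ ?_
    · intro a ha hd
      rw [Polynomial.dvd_iff_isRoot, Polynomial.IsRoot, Polynomial.eval_C] at hd
      exact ha hd
    · -- otherwise `α ^ k` sends `u` to a constant, so `u` is that constant
      intro k hd
      rw [Polynomial.dvd_iff_isRoot, Polynomial.IsRoot, Polynomial.eval_add, Polynomial.eval_X,
        Polynomial.eval_C] at hd
      refine hu ⟨-lam, ?_⟩
      apply (α ^ k).injective
      rw [AlgEquiv.commutes, map_neg, neg_eq_iff_add_eq_zero]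
      exact hd
  have hPset : ∀ lam : K, ((centralIdeal _ (hcent lam) : TwoSidedIdeal R) : Set R) =
      {r : R | ∃ s : R, r = (z - algebraMap K R lam) * s} := by
    intro lam
    ext r
    rw [SetLike.mem_coe, mem_centralIdeal, hφ]
    rfl
  have hmemP : ∀ lam : K, z - algebraMap K R lam ∈ centralIdeal _ (hcent lam) := by
    intro lam
    rw [mem_centralIdeal, hφ]
    exact ⟨1, (mul_one _).symm⟩
  have hPbot : ∀ lam : K, centralIdeal _ (hcent lam) ≠ ⊥ := by
    intro lam hbot
    have h1 := hmemP lam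
    rw [hbot, TwoSidedIdeal.mem_bot, ← hφ] at h1
    exact (hprimePoly lam).ne_zero (hinj _ h1)
  have hle : ∀ (lam : K) (Q : TwoSidedIdeal R), z - algebraMap K R lam ∈ Q →
      centralIdeal _ (hcent lam) ≤ Q := by
    intro lam Q hQ r hr
    obtain ⟨s, rfl⟩ := mem_centralIdeal.mp hr
    rw [hφ]
    exact Q.mul_mem_right _ _ hQ
  have hexists : ∀ Q : TwoSidedIdeal R, IsPrimeTwoSided Q → Q ≠ ⊥ →
      ∃ c : K, z - algebraMap K R c ∈ Q := by
    intro Q hQ hQ0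
    obtain ⟨p, hp, hpQ⟩ := hmeet Q hQ0
    exact hQ.exists_sub_mem hzc p hp hpQ
  refine ⟨⟨fun lam => ⟨centralIdeal _ (hcent lam), hPset lam, hPprime lam, hPbot lam, ?_⟩, ?_⟩, ?_⟩
  · intro Q hQ hlt
    by_contra hQ0
    obtain ⟨c, hc⟩ := hexists Q hQ hQ0
    by_cases hcl : c = lam
    · subst hcl
      exact hlt.not_ge (hle c Q hc)
    · -- the proper ideal of `lam` would contain the nonzero constant `lam - c`
      have h1 := TwoSidedIdeal.sub_mem _ (hlt.le hc) (hmemP lam)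
      rw [sub_sub_sub_cancel_left, ← map_sub] at h1
      have h2 := TwoSidedIdeal.mul_mem_left _ (algebraMap K R (lam - c)⁻¹) _ h1
      rw [← map_mul, inv_mul_cancel₀ (sub_ne_zero.mpr (Ne.symm hcl)), map_one,
        TwoSidedIdeal.one_mem_iff] at h2
      exact (hPprime lam).1 h2
  · intro P hP hP0 hmin
    obtain ⟨c, hc⟩ := hexists P hP hP0
    refine ⟨c, ?_⟩
    rw [← hPset c]
    rcases (hle c P hc).lt_or_eq with hlt | heq
    · exact absurd (hmin _ (hPprime c) hlt) (hPbot c)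
    · rw [heq]
  · intro T hT
    obtain ⟨p, hp, hpT⟩ := hmeet T hT
    refine ⟨Polynomial.aeval z p, hpT, fun h0 => hp ?_, p, rfl⟩
    rw [hz, ← hR.polyHom_map] at h0
    have := hinj _ h0
    exact Polynomial.map_injective _ (algebraMap K A).injective (by simpa using this)
end
end
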